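/- Let g and E be the reference functions defined from the Dirichlet square energies and the vanishing-field strip energies respectively. Then E(L) = 2 L^{-4/3} ∫₀¹ g(b) db + o(L^{-4/3}) as L → 0⁺; equivalently, L^{4/3} E(L) converges to 2∫₀¹ g(b) db as L → 0⁺. -/

import Mathlib

open MeasureTheory Real Set Filter Topology

noncomputable section

/-- The open square `Q_r = (-r/2, r/2) × (-r/2, r/2)`. -/
def Qsq (r : ℝ) : Set (ℝ × ℝ) := Ioo (-r/2) (r/2) ×ˢ Ioo (-r/2) (r/2)

/-- The vertical strip `S_R = (-R/2, R/2) × ℝ`. -/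
def Strip (R : ℝ) : Set (ℝ × ℝ) := Ioo (-R/2) (R/2) ×ˢ (univ : Set ℝ)

/-- The magnetic potential `A₀(x) = (-x₂/2, x₁/2)` of the constant unit magnetic field. -/
def A₀ (x : ℝ × ℝ) : ℝ × ℝ := (-x.2 / 2, x.1 / 2)

/-- The magnetic potential `A_van(x) = (-x₂²/2, 0)` generating the field `B(x) = x₂`. -/
def Avan (x : ℝ × ℝ) : ℝ × ℝ := (-x.2 ^ 2 / 2, 0)

/-- The magnetic gradient energy density `|(∇ - iA)u|²` at `x`. -/
def magGradSq (A : ℝ × ℝ → ℝ × ℝ) (u : ℝ × ℝ → ℂ) (x : ℝ × ℝ) : ℝ :=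
  ‖fderiv ℝ u x (1, 0) - Complex.I * ((A x).1 : ℂ) * u x‖ ^ 2 +
  ‖fderiv ℝ u x (0, 1) - Complex.I * ((A x).2 : ℂ) * u x‖ ^ 2

/-- The Ginzburg–Landau functional `F_{b,Q_r}` on the square `Q_r`. -/
def Fsq (b r : ℝ) (u : ℝ × ℝ → ℂ) : ℝ :=
  ∫ x in Qsq r, (b * magGradSq A₀ u x - ‖u x‖ ^ 2 + ‖u x‖ ^ 4 / 2)

/-- (Smooth surrogate of) membership in `H¹(Q_r; ℂ)`. -/
def MemH1sq (u : ℝ × ℝ → ℂ) : Prop := ContDiff ℝ 1 u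

/-- (Smooth surrogate of) membership in `H¹₀(Q_r; ℂ)`: vanishing on the boundary. -/
def MemH10sq (r : ℝ) (u : ℝ × ℝ → ℂ) : Prop :=
  ContDiff ℝ 1 u ∧ ∀ x ∈ frontier (Qsq r), u x = 0

/-- The Dirichlet ground-state energy `e_D(b, r)`. -/
def eD (b r : ℝ) : ℝ := sInf (Fsq b r '' {u | MemH10sq r u})

/-- The Neumann ground-state energy `e_N(b, r)`. -/
def eN (b r : ℝ) : ℝ := sInf (Fsq b r '' {u | MemH1sq u})

/-- The energy density of the strip functional `𝓔_{L,R}` at `x`. -/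
def stripDensity (L : ℝ) (u : ℝ × ℝ → ℂ) (x : ℝ × ℝ) : ℝ :=
  magGradSq Avan u x - L ^ (-(2:ℝ)/3) * ‖u x‖ ^ 2 + (L ^ (-(2:ℝ)/3) / 2) * ‖u x‖ ^ 4

/-- The strip functional `𝓔_{L,R}`. -/
def Estrip (L R : ℝ) (u : ℝ × ℝ → ℂ) : ℝ := ∫ x in Strip R, stripDensity L u x

/-- (Surrogate of) membership in the space `H¹_{mag,0}(S_R)`. -/
def MemH1mag0 (R : ℝ) (u : ℝ × ℝ → ℂ) : Prop :=
  ContDiff ℝ 1 u ∧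
  IntegrableOn (fun x => ‖u x‖ ^ 2) (Strip R) ∧
  IntegrableOn (magGradSq Avan u) (Strip R) ∧
  IntegrableOn (fun x => ‖u x‖ ^ 4) (Strip R) ∧
  ∀ x ∈ frontier (Strip R), u x = 0

/-- The ground-state energy `e_gs(L; R)` of the strip functional. -/
def egs (L R : ℝ) : ℝ := sInf (Estrip L R '' {u | MemH1mag0 R u})

/-- `g : (0,∞) → ℝ` is the thermodynamic limit of the Dirichlet square energies. -/
def IsLimitG (g : ℝ → ℝ) : Prop :=
  ∀ b > 0, Tendsto (fun r => eD b r / r ^ 2) atTop (nhds (g b))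

/-- `E : (0,∞) → ℝ` is the large-`R` limit of the strip energies. -/
def IsLimitE (E : ℝ → ℝ) : Prop :=
  ∀ L > 0, Tendsto (fun R => egs L R / R) atTop (nhds (E L))

/-!
The field `x₂` is nearly constant at scale one, and near the height `t` it equals the constant field
`t` up to a gauge. After dilation, a cell at height `t = lam * b`, with `lam = L ^ (-2/3)`, carries
energy `lam / t` times `F_b` on a square of side `√t`, about `lam * g b`. Summing over the unit
cells of the strip gives `lam² ∫ g` for each of the two half-planes, which a reflection identifies.

For the upper bound, Dirichlet almost-minimizers on disjoint cells are superposed. For the lower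
bound, a configuration is localized to cells by averaging over all translates of a cutoff `χ`; the
localization error is a bounded multiple of the mass, small compared with `lam`. Cells with `b > 1`
do not contribute to the upper bound and do not hurt in the lower bound, because
`∫ |(∇ - iA)u|² ≥ ∫ x₂ |u|²` makes the energy nonnegative there.
-/

section MagneticEnergy

variable {A : ℝ × ℝ → ℝ × ℝ} {u v : ℝ × ℝ → ℂ} {f : ℝ × ℝ → ℝ} {x : ℝ × ℝ} {p q σ : ℝ}

/-- The magnetic derivative `(∇ - iA)u · e` at `x` in the direction `e`. -/
def magDeriv (A : ℝ × ℝ → ℝ × ℝ) (u : ℝ × ℝ → ℂ) (x e : ℝ × ℝ) : ℂ :=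
  fderiv ℝ u x e - Complex.I * (((A x).1 * e.1 + (A x).2 * e.2 : ℝ) : ℂ) * u x

/-- The Ginzburg–Landau energy density `p|(∇ - iA)u|² - q|u|² + σ|u|⁴`. The square and the strip
functional are both integrals of such densities. -/
def glDensity (p q σ : ℝ) (A : ℝ × ℝ → ℝ × ℝ) (u : ℝ × ℝ → ℂ) (x : ℝ × ℝ) : ℝ :=
  p * magGradSq A u x - q * ‖u x‖ ^ 2 + σ * ‖u x‖ ^ 4

lemma magGradSq_eq_norm_magDeriv_sq_add (A : ℝ × ℝ → ℝ × ℝ) (u : ℝ × ℝ → ℂ) (x : ℝ × ℝ) :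
    magGradSq A u x = ‖magDeriv A u x (1, 0)‖ ^ 2 + ‖magDeriv A u x (0, 1)‖ ^ 2 := by
  simp [magGradSq, magDeriv]

lemma magGradSq_nonneg (A : ℝ × ℝ → ℝ × ℝ) (u : ℝ × ℝ → ℂ) (x : ℝ × ℝ) :
    0 ≤ magGradSq A u x := by
  unfold magGradSq; positivity

lemma continuous_A₀ : Continuous A₀ := by unfold A₀; fun_prop

lemma continuous_Avan : Continuous Avan := by unfold Avan; fun_prop

lemma magGradSq_congr (h : u =ᶠ[𝓝 x] v) : magGradSq A u x = magGradSq A v x := by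
  rw [magGradSq, magGradSq, h.fderiv_eq, h.eq_of_nhds]

lemma glDensity_congr (h : u =ᶠ[𝓝 x] v) : glDensity p q σ A u x = glDensity p q σ A v x := by
  rw [glDensity, glDensity, magGradSq_congr h, h.eq_of_nhds]

@[simp] lemma magGradSq_zero (A : ℝ × ℝ → ℝ × ℝ) (x : ℝ × ℝ) :
    magGradSq A (fun _ ↦ 0) x = 0 := by
  simp [magGradSq]

@[simp] lemma glDensity_zero (p q σ : ℝ) (A : ℝ × ℝ → ℝ × ℝ) (x : ℝ × ℝ) :
    glDensity p q σ A (fun _ ↦ 0) x = 0 := by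
  simp [glDensity]

lemma magGradSq_eq_zero_of_notMem_tsupport (h : x ∉ tsupport u) : magGradSq A u x = 0 := by
  rw [magGradSq_congr (notMem_tsupport_iff_eventuallyEq.1 h)]; exact magGradSq_zero A x

lemma glDensity_eq_zero_of_notMem_tsupport (h : x ∉ tsupport u) : glDensity p q σ A u x = 0 := by
  rw [glDensity_congr (notMem_tsupport_iff_eventuallyEq.1 h)]; exact glDensity_zero p q σ A x

lemma hasCompactSupport_magGradSq (hu : HasCompactSupport u) :
    HasCompactSupport (magGradSq A u) :=
  HasCompactSupport.intro hu fun _ ↦ magGradSq_eq_zero_of_notMem_tsupport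

lemma hasCompactSupport_glDensity (hu : HasCompactSupport u) :
    HasCompactSupport (glDensity p q σ A u) :=
  HasCompactSupport.intro hu fun _ ↦ glDensity_eq_zero_of_notMem_tsupport

lemma setIntegral_glDensity_of_tsupport_subset {U : Set (ℝ × ℝ)} (h : tsupport u ⊆ U) :
    ∫ x in U, glDensity p q σ A u x = ∫ x, glDensity p q σ A u x :=
  setIntegral_eq_integral_of_forall_compl_eq_zero fun _ hx ↦
    glDensity_eq_zero_of_notMem_tsupport fun hxu ↦ hx (h hxu)

lemma continuous_fderiv_apply_const {E F : Type*} [NormedAddCommGroup E] [NormedSpace ℝ E]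
    [NormedAddCommGroup F] [NormedSpace ℝ F] {u : E → F} (hu : ContDiff ℝ 1 u) (e : E) :
    Continuous fun x ↦ fderiv ℝ u x e :=
  (hu.continuous_fderiv one_ne_zero).clm_apply continuous_const

lemma continuous_magDeriv (hA : Continuous A) (hu : ContDiff ℝ 1 u) (e : ℝ × ℝ) :
    Continuous fun x ↦ magDeriv A u x e := by
  have := continuous_fderiv_apply_const hu e
  have := hu.continuous
  unfold magDeriv
  fun_prop

lemma continuous_magGradSq (hA : Continuous A) (hu : ContDiff ℝ 1 u) :
    Continuous (magGradSq A u) := by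
  have h₁ := continuous_magDeriv hA hu (1, 0)
  have h₂ := continuous_magDeriv hA hu (0, 1)
  simp only [funext (magGradSq_eq_norm_magDeriv_sq_add A u)]
  fun_prop

lemma continuous_glDensity (hA : Continuous A) (hu : ContDiff ℝ 1 u) :
    Continuous (glDensity p q σ A u) := by
  have := continuous_magGradSq hA hu
  have := hu.continuous
  unfold glDensity
  fun_prop

lemma integrable_glDensity (hA : Continuous A) (hu : ContDiff ℝ 1 u) (hc : HasCompactSupport u) :
    Integrable (glDensity p q σ A u) :=
  (continuous_glDensity hA hu).integrable_of_hasCompactSupport (hasCompactSupport_glDensity hc)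

lemma magDeriv_smul (hf : DifferentiableAt ℝ f x) (hu : DifferentiableAt ℝ u x) (e : ℝ × ℝ) :
    magDeriv A (fun y ↦ f y • u y) x e = f x • magDeriv A u x e + fderiv ℝ f x e • u x := by
  rw [magDeriv, fderiv_fun_smul hf hu]
  simp only [magDeriv, add_apply, smul_apply, ContinuousLinearMap.smulRight_apply,
    Complex.real_smul]
  ring

-- The potential only rotates the phase of `u`, so it does not see `|u|`.
lemma inner_magDeriv_self (A : ℝ × ℝ → ℝ × ℝ) (u : ℝ × ℝ → ℂ) (x e : ℝ × ℝ) :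
    inner ℝ (u x) (magDeriv A u x e) = inner ℝ (u x) (fderiv ℝ u x e) := by
  simp [Complex.inner, magDeriv]; ring

lemma magGradSq_smul (hf : DifferentiableAt ℝ f x) (hu : DifferentiableAt ℝ u x) :
    magGradSq A (fun y ↦ f y • u y) x =
      f x ^ 2 * magGradSq A u x
      + 2 * f x * (fderiv ℝ f x (1, 0) * inner ℝ (u x) (magDeriv A u x (1, 0))
          + fderiv ℝ f x (0, 1) * inner ℝ (u x) (magDeriv A u x (0, 1)))
      + (fderiv ℝ f x (1, 0) ^ 2 + fderiv ℝ f x (0, 1) ^ 2) * ‖u x‖ ^ 2 := by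
  simp only [magGradSq_eq_norm_magDeriv_sq_add, magDeriv_smul hf hu, norm_add_sq_real,
    norm_smul, mul_pow, norm_eq_abs, sq_abs, real_inner_smul_right,
    real_inner_comm (u x)]
  ring

lemma glDensity_const_smul (c : ℝ) (hu : DifferentiableAt ℝ u x) :
    glDensity p q σ A (fun y ↦ c • u y) x =
      glDensity (p * c ^ 2) (q * c ^ 2) (σ * c ^ 4) A u x := by
  rw [glDensity, glDensity, magGradSq_smul (differentiableAt_const c) hu]
  simp only [fderiv_fun_const, norm_smul, mul_pow, norm_eq_abs, sq_abs,
    Even.pow_abs (by decide : Even 4)]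
  simp
  ring

lemma magGradSq_smul_le (hf : DifferentiableAt ℝ f x) (hu : DifferentiableAt ℝ u x)
    (hf0 : 0 ≤ f x) (hf1 : f x ≤ 1) {a b : ℝ}
    (h : ∀ e : ℝ × ℝ, ‖e‖ ≤ 1 →
      |fderiv ℝ f x e| * ‖u x‖ ≤ a * ‖u x‖ + b * ‖magDeriv A u x e‖) :
    magGradSq A (fun y ↦ f y • u y) x ≤
      (2 + 4 * b ^ 2) * magGradSq A u x + 8 * a ^ 2 * ‖u x‖ ^ 2 := by
  have directional (e : ℝ × ℝ) (he : ‖e‖ ≤ 1) :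
      ‖magDeriv A (fun y ↦ f y • u y) x e‖ ^ 2 ≤
        (2 + 4 * b ^ 2) * ‖magDeriv A u x e‖ ^ 2 + 4 * a ^ 2 * ‖u x‖ ^ 2 := by
    set d := magDeriv A u x e
    have norm_le : ‖magDeriv A (fun y ↦ f y • u y) x e‖ ≤ ‖d‖ + (a * ‖u x‖ + b * ‖d‖) := by
      rw [magDeriv_smul hf hu]
      refine (norm_add_le _ _).trans (add_le_add ?_ ?_)
      · rw [norm_smul, norm_of_nonneg hf0]
        exact mul_le_of_le_one_left (norm_nonneg _) hf1
      · rw [norm_smul]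
        exact h e he
    calc _ ≤ (‖d‖ + (a * ‖u x‖ + b * ‖d‖)) ^ 2 := by gcongr
      _ ≤ 2 * ‖d‖ ^ 2 + 2 * (a * ‖u x‖ + b * ‖d‖) ^ 2 := by
        linarith [add_sq_le (a := ‖d‖) (b := a * ‖u x‖ + b * ‖d‖)]
      _ ≤ _ := by linarith [add_sq_le (a := a * ‖u x‖) (b := b * ‖d‖)]
  rw [magGradSq_eq_norm_magDeriv_sq_add, magGradSq_eq_norm_magDeriv_sq_add]
  linarith [directional (1, 0) (by simp [Prod.norm_def]),
    directional (0, 1) (by simp [Prod.norm_def])]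

lemma abs_glDensity_le (p q σ : ℝ) (A : ℝ × ℝ → ℝ × ℝ) (u : ℝ × ℝ → ℂ) (x : ℝ × ℝ) :
    |glDensity p q σ A u x| ≤
      |p| * magGradSq A u x + |q| * ‖u x‖ ^ 2 + |σ| * ‖u x‖ ^ 4 := by
  calc _ ≤ |p * magGradSq A u x| + |q * ‖u x‖ ^ 2| + |σ * ‖u x‖ ^ 4| :=
        (abs_add_le _ _).trans (by gcongr; exact abs_sub _ _)
    _ = _ := by
        simp only [abs_mul, abs_of_nonneg (magGradSq_nonneg A u x), abs_pow, abs_norm]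

end MagneticEnergy

section Truncation

variable {U : Set (ℝ × ℝ)} {A : ℝ × ℝ → ℝ × ℝ} {u : ℝ × ℝ → ℂ} {x : ℝ × ℝ} {p q σ N : ℝ}

/-- A smooth step, equal to `0` on `(-∞, 1]` and to `1` on `[2, ∞)`. -/
def smoothStep (s : ℝ) : ℝ := smoothTransition (s - 1)

lemma contDiff_smoothStep : ContDiff ℝ 1 smoothStep :=
  smoothTransition.contDiff.comp (contDiff_id.sub contDiff_const)

lemma smoothStep_eq_zero {s : ℝ} (h : s ≤ 1) : smoothStep s = 0 :=
  smoothTransition.zero_of_nonpos (by linarith)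

lemma smoothStep_eq_one {s : ℝ} (h : 2 ≤ s) : smoothStep s = 1 :=
  smoothTransition.one_of_one_le (by linarith)

lemma smoothStep_nonneg (s : ℝ) : 0 ≤ smoothStep s := smoothTransition.nonneg _

lemma smoothStep_le_one (s : ℝ) : smoothStep s ≤ 1 := smoothTransition.le_one _

lemma exists_abs_mul_deriv_smoothStep_le : ∃ C, ∀ s, |s * deriv smoothStep s| ≤ C := by
  refine HasCompactSupport.exists_bound_of_continuous ?_
    (continuous_id.mul (contDiff_smoothStep.continuous_deriv le_rfl))
  refine HasCompactSupport.intro (isCompact_Icc (a := (1 : ℝ)) (b := 2)) fun s hs ↦ ?_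
  rw [mem_Icc, not_and_or, not_le, not_le] at hs
  have locally_const : ∃ c, smoothStep =ᶠ[𝓝 s] fun _ ↦ c := by
    rcases hs with hs | hs
    · exact ⟨0, by filter_upwards [Iio_mem_nhds hs] with y hy using smoothStep_eq_zero hy.le⟩
    · exact ⟨1, by filter_upwards [Ioi_mem_nhds hs] with y hy using smoothStep_eq_one hy.le⟩
  obtain ⟨c, hc⟩ := locally_const
  simp [hc.deriv_eq]

/-- A fixed bump function on the plane, equal to `1` near the origin. -/
def planeBump : ContDiffBump (0 : ℝ × ℝ) := ⟨1, 2, one_pos, one_lt_two⟩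

lemma exists_norm_fderiv_planeBump_le : ∃ C, ∀ x, ‖fderiv ℝ planeBump x‖ ≤ C :=
  (planeBump.hasCompactSupport.fderiv ℝ).exists_bound_of_continuous
    ((planeBump.contDiff (n := 1)).continuous_fderiv one_ne_zero)

/-- The truncation factor at scale `N`: it cuts off both the region `|x| ≥ 2N` and the region where
`|u|² ≤ 1/N`. The second cutoff is what moves the support of a function vanishing on `∂U` away from
`∂U`. -/
def truncFactor (N : ℝ) (u : ℝ × ℝ → ℂ) (x : ℝ × ℝ) : ℝ :=
  planeBump (N⁻¹ • x) * smoothStep (N * ‖u x‖ ^ 2)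

lemma truncFactor_nonneg (N : ℝ) (u : ℝ × ℝ → ℂ) (x : ℝ × ℝ) : 0 ≤ truncFactor N u x :=
  mul_nonneg planeBump.nonneg (smoothStep_nonneg _)

lemma truncFactor_le_one (N : ℝ) (u : ℝ × ℝ → ℂ) (x : ℝ × ℝ) : truncFactor N u x ≤ 1 :=
  mul_le_one₀ planeBump.le_one (smoothStep_nonneg _) (smoothStep_le_one _)

lemma contDiff_truncFactor (N : ℝ) (hu : ContDiff ℝ 1 u) : ContDiff ℝ 1 (truncFactor N u) :=
  (planeBump.contDiff.comp (contDiff_const_smul _)).mul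
    (contDiff_smoothStep.comp (contDiff_const.mul (hu.norm_sq ℝ)))

lemma fderiv_truncFactor (N : ℝ) (hu : ContDiff ℝ 1 u) (x e : ℝ × ℝ) :
    fderiv ℝ (truncFactor N u) x e =
      N⁻¹ * fderiv ℝ planeBump (N⁻¹ • x) e * smoothStep (N * ‖u x‖ ^ 2)
      + planeBump (N⁻¹ • x) * (deriv smoothStep (N * ‖u x‖ ^ 2)
          * (N * (2 * inner ℝ (u x) (fderiv ℝ u x e)))) := by
  have hbump : HasFDerivAt (fun y : ℝ × ℝ ↦ planeBump (N⁻¹ • y)) _ x :=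
    ((planeBump.contDiff (n := 1)).differentiable one_ne_zero (N⁻¹ • x)).hasFDerivAt.comp x
      ((hasFDerivAt_id x).const_smul N⁻¹)
  have hstep : HasFDerivAt (fun y ↦ smoothStep (N * ‖u y‖ ^ 2)) _ x :=
    HasDerivAt.comp_hasFDerivAt (h₂ := smoothStep) x
      (contDiff_smoothStep.differentiable one_ne_zero _).hasDerivAt
      ((hu.differentiable one_ne_zero x).hasFDerivAt.norm_sq.const_mul N)
  have hmul : HasFDerivAt (truncFactor N u) _ x := hbump.mul hstep
  rw [hmul.fderiv]
  simp
  ring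

lemma abs_fderiv_truncFactor_mul_norm_le {C₁ C₂ : ℝ}
    (hC₁ : ∀ s, |s * deriv smoothStep s| ≤ C₁) (hC₂ : ∀ y, ‖fderiv ℝ planeBump y‖ ≤ C₂)
    (hN : 1 ≤ N) (hu : ContDiff ℝ 1 u) (x : ℝ × ℝ) {e : ℝ × ℝ} (he : ‖e‖ ≤ 1) :
    |fderiv ℝ (truncFactor N u) x e| * ‖u x‖ ≤
      C₂ * ‖u x‖ + 2 * C₁ * ‖magDeriv A u x e‖ := by
  rw [fderiv_truncFactor N hu, ← inner_magDeriv_self A]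
  set d := magDeriv A u x e
  set s := N * ‖u x‖ ^ 2
  have hN0 : 0 ≤ N := by linarith
  have spatial : |N⁻¹ * fderiv ℝ planeBump (N⁻¹ • x) e * smoothStep s| ≤ C₂ := by
    have hinv : |N⁻¹| ≤ 1 := by
      rw [abs_of_nonneg (by positivity)]; exact inv_le_one_of_one_le₀ hN
    have hfd : |fderiv ℝ planeBump (N⁻¹ • x) e| ≤ C₂ :=
      (ContinuousLinearMap.unit_le_opNorm _ _ he).trans (hC₂ _)
    have hstep : |smoothStep s| ≤ 1 := by
      rw [abs_of_nonneg (smoothStep_nonneg s)]; exact smoothStep_le_one s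
    have hC₂0 : 0 ≤ C₂ := (abs_nonneg _).trans hfd
    rw [abs_mul, abs_mul]
    calc _ ≤ 1 * C₂ * 1 := by gcongr
      _ = C₂ := by ring
  have amplitude :
      |planeBump (N⁻¹ • x) * (deriv smoothStep s * (N * (2 * inner ℝ (u x) d)))| * ‖u x‖ ≤
        2 * C₁ * ‖d‖ := by
    have hbump : |planeBump (N⁻¹ • x)| ≤ 1 := by
      rw [abs_of_nonneg planeBump.nonneg]; exact planeBump.le_one
    have hd := abs_real_inner_le_norm (u x) d
    have hstep : N * ‖u x‖ ^ 2 * |deriv smoothStep s| ≤ C₁ := by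
      rw [← abs_of_nonneg (by positivity : 0 ≤ N * ‖u x‖ ^ 2), ← abs_mul]
      exact hC₁ s
    simp only [abs_mul, abs_two, abs_of_nonneg hN0]
    calc _ ≤ 1 * (|deriv smoothStep s| * (N * (2 * (‖u x‖ * ‖d‖)))) * ‖u x‖ := by gcongr
      _ = 2 * (N * ‖u x‖ ^ 2 * |deriv smoothStep s|) * ‖d‖ := by ring
      _ ≤ 2 * C₁ * ‖d‖ := by gcongr
  refine (mul_le_mul_of_nonneg_right (abs_add_le _ _) (norm_nonneg _)).trans ?_
  rw [add_mul]
  gcongr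

lemma exists_magGradSq_truncFactor_smul_le (A : ℝ × ℝ → ℝ × ℝ) (hu : ContDiff ℝ 1 u) :
    ∃ C, ∀ N, 1 ≤ N → ∀ x, magGradSq A (fun y ↦ truncFactor N u y • u y) x ≤
      C * (magGradSq A u x + ‖u x‖ ^ 2) := by
  obtain ⟨C₁, hC₁⟩ := exists_abs_mul_deriv_smoothStep_le
  obtain ⟨C₂, hC₂⟩ := exists_norm_fderiv_planeBump_le
  refine ⟨2 + 4 * (2 * C₁) ^ 2 + 8 * C₂ ^ 2, fun N hN x ↦ ?_⟩
  have bound := magGradSq_smul_le ((contDiff_truncFactor N hu).differentiable one_ne_zero x)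
    (hu.differentiable one_ne_zero x) (truncFactor_nonneg N u x) (truncFactor_le_one N u x)
    fun e he ↦ abs_fderiv_truncFactor_mul_norm_le (A := A) hC₁ hC₂ hN hu x he
  have := magGradSq_nonneg A u x
  nlinarith [mul_nonneg (by positivity : 0 ≤ 8 * C₂ ^ 2) this,
    mul_nonneg (by positivity : 0 ≤ 2 + 4 * (2 * C₁) ^ 2) (sq_nonneg ‖u x‖)]

/-- The truncation of `u` at scale `N`, extended by zero outside `U`. -/
def truncate (U : Set (ℝ × ℝ)) (N : ℝ) (u : ℝ × ℝ → ℂ) : ℝ × ℝ → ℂ :=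
  U.indicator fun x ↦ truncFactor N u x • u x

lemma truncate_eq_zero (U : Set (ℝ × ℝ)) (h : truncFactor N u x = 0) : truncate U N u x = 0 := by
  classical
  simp [truncate, indicator_apply, h]

lemma truncate_eventuallyEq_smul (hU : IsOpen U) (hx : x ∈ U) (N : ℝ) (u : ℝ × ℝ → ℂ) :
    truncate U N u =ᶠ[𝓝 x] fun y ↦ truncFactor N u y • u y := by
  filter_upwards [hU.mem_nhds hx] with y hy using indicator_of_mem hy _

lemma truncate_eventuallyEq_zero_of_eq_zero (U : Set (ℝ × ℝ)) (N : ℝ) (hu : Continuous u)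
    (hx : u x = 0) : truncate U N u =ᶠ[𝓝 x] fun _ ↦ 0 := by
  have small : ∀ᶠ y in 𝓝 x, N * ‖u y‖ ^ 2 < 1 :=
    (by fun_prop : Continuous fun y ↦ N * ‖u y‖ ^ 2).continuousAt.eventually_lt
      continuousAt_const (by simp [hx])
  filter_upwards [small] with y hy
  exact truncate_eq_zero U (by simp [truncFactor, smoothStep_eq_zero hy.le])

lemma truncate_eventuallyEq_zero_of_notMem (hU : IsOpen U) (N : ℝ) (hu : Continuous u)
    (hu0 : ∀ x ∈ frontier U, u x = 0) (hx : x ∉ U) : truncate U N u =ᶠ[𝓝 x] fun _ ↦ 0 := by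
  by_cases hcl : x ∈ closure U
  · exact truncate_eventuallyEq_zero_of_eq_zero U N hu
      (hu0 x (hU.frontier_eq ▸ ⟨hcl, hx⟩))
  · filter_upwards [isClosed_closure.isOpen_compl.mem_nhds hcl] with y hy
    exact indicator_of_notMem (fun h ↦ hy (subset_closure h)) _

lemma contDiff_truncate (hU : IsOpen U) (N : ℝ) (hu : ContDiff ℝ 1 u)
    (hu0 : ∀ x ∈ frontier U, u x = 0) : ContDiff ℝ 1 (truncate U N u) := by
  refine contDiff_iff_contDiffAt.2 fun x ↦ ?_
  by_cases hx : x ∈ U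
  · exact ((contDiff_truncFactor N hu).smul hu).contDiffAt.congr_of_eventuallyEq
      (truncate_eventuallyEq_smul hU hx N u)
  · exact contDiffAt_const.congr_of_eventuallyEq
      (truncate_eventuallyEq_zero_of_notMem hU N hu.continuous hu0 hx)

lemma tsupport_truncate_subset (hU : IsOpen U) (N : ℝ) (hu : Continuous u)
    (hu0 : ∀ x ∈ frontier U, u x = 0) : tsupport (truncate U N u) ⊆ U := fun x hx ↦ by
  by_contra h
  exact notMem_tsupport_iff_eventuallyEq.2
    (truncate_eventuallyEq_zero_of_notMem hU N hu hu0 h) hx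

lemma hasCompactSupport_truncate (U : Set (ℝ × ℝ)) (hN : 0 < N) (u : ℝ × ℝ → ℂ) :
    HasCompactSupport (truncate U N u) := by
  refine HasCompactSupport.intro (isCompact_closedBall (0 : ℝ × ℝ) (2 * N)) fun x hx ↦ ?_
  rw [Metric.mem_closedBall, dist_zero_right, not_le] at hx
  have hbump : planeBump (N⁻¹ • x) = 0 := by
    apply planeBump.zero_of_le_dist
    rw [dist_zero_right, norm_smul, norm_of_nonneg (by positivity), inv_mul_eq_div]
    exact (le_div_iff₀ hN).2 hx.le
  exact truncate_eq_zero U (by simp [truncFactor, hbump])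

lemma eventually_truncate_eventuallyEq (hU : IsOpen U) (hu : Continuous u) (hx : x ∈ U)
    (hux : u x ≠ 0) : ∀ᶠ N in atTop, truncate U N u =ᶠ[𝓝 x] u := by
  have hpos : 0 < ‖u x‖ ^ 2 := by positivity
  filter_upwards [eventually_gt_atTop (2 / ‖u x‖ ^ 2), eventually_gt_atTop ‖x‖,
    eventually_gt_atTop 0] with N hlarge hball hN
  have large : ∀ᶠ y in 𝓝 x, 2 < N * ‖u y‖ ^ 2 :=
    continuousAt_const.eventually_lt
      (by fun_prop : Continuous fun y ↦ N * ‖u y‖ ^ 2).continuousAt ((div_lt_iff₀ hpos).1 hlarge)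
  have ball : ∀ᶠ y in 𝓝 x, ‖y‖ < N :=
    continuous_norm.continuousAt.eventually_lt continuousAt_const hball
  filter_upwards [large, ball, truncate_eventuallyEq_smul hU hx N u] with y hy hyN htrunc
  have hbump : planeBump (N⁻¹ • y) = 1 := by
    apply planeBump.one_of_mem_closedBall
    rw [Metric.mem_closedBall, dist_zero_right, norm_smul, norm_of_nonneg (by positivity),
      inv_mul_eq_div]
    exact div_le_one_of_le₀ hyN.le hN.le
  simp [htrunc, truncFactor, hbump, smoothStep_eq_one hy.le]

-- The limit is the density of `u` off the zero set of `u`, and `0` on it.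
lemma tendsto_glDensity_truncate (hU : IsOpen U) (hu : Continuous u) (hx : x ∈ U) :
    Tendsto (fun N ↦ glDensity p q σ A (truncate U N u) x) atTop
      (𝓝 ({y | u y ≠ 0}.indicator (glDensity p q σ A u) x)) := by
  by_cases hux : u x = 0
  · have hzero (N : ℝ) : glDensity p q σ A (truncate U N u) x = 0 := by
      rw [glDensity_congr (truncate_eventuallyEq_zero_of_eq_zero U N hu hux), glDensity_zero]
    simp [hux, hzero]
  · rw [indicator_of_mem (by exact hux)]
    refine tendsto_const_nhds.congr' ?_
    filter_upwards [eventually_truncate_eventuallyEq hU hu hx hux] with N hN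
    exact (glDensity_congr hN).symm

variable (p q σ) in
lemma exists_abs_glDensity_truncate_le (hU : IsOpen U) (A : ℝ × ℝ → ℝ × ℝ)
    (hu : ContDiff ℝ 1 u) :
    ∃ C, ∀ N, 1 ≤ N → ∀ x ∈ U, ‖glDensity p q σ A (truncate U N u) x‖ ≤
      |p| * (C * (magGradSq A u x + ‖u x‖ ^ 2)) + |q| * ‖u x‖ ^ 2 + |σ| * ‖u x‖ ^ 4 := by
  obtain ⟨C, hC⟩ := exists_magGradSq_truncFactor_smul_le A hu
  refine ⟨C, fun N hN x hx ↦ ?_⟩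
  rw [glDensity_congr (truncate_eventuallyEq_smul hU hx N u)]
  have norm_le : ‖truncFactor N u x • u x‖ ≤ ‖u x‖ := by
    rw [norm_smul, norm_of_nonneg (truncFactor_nonneg N u x)]
    exact mul_le_of_le_one_left (norm_nonneg _) (truncFactor_le_one N u x)
  refine (abs_glDensity_le p q σ A _ x).trans ?_
  gcongr
  exact hC N hN x

theorem exists_hasCompactSupport_integral_glDensity_lt (hU : IsOpen U) (hA : Continuous A)
    (hu : ContDiff ℝ 1 u) (hu0 : ∀ x ∈ frontier U, u x = 0)
    (hu2 : IntegrableOn (fun x ↦ ‖u x‖ ^ 2) U) (hu4 : IntegrableOn (fun x ↦ ‖u x‖ ^ 4) U)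
    (hgrad : IntegrableOn (magGradSq A u) U) (hp : 0 ≤ p) {ε : ℝ} (hε : 0 < ε) :
    ∃ v : ℝ × ℝ → ℂ, ContDiff ℝ 1 v ∧ HasCompactSupport v ∧ tsupport v ⊆ U ∧
      ∫ x, glDensity p q σ A v x < (∫ x in U, glDensity p q σ A u x) + ε := by
  have ae_of_forall {P : ℝ × ℝ → Prop} (h : ∀ x ∈ U, P x) : ∀ᵐ x ∂volume.restrict U, P x :=
    (ae_restrict_iff' hU.measurableSet).2 (Eventually.of_forall h)
  obtain ⟨C, hC⟩ := exists_abs_glDensity_truncate_le p q σ hU A hu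
  have hlim : Tendsto (fun N ↦ ∫ x in U, glDensity p q σ A (truncate U N u) x) atTop
      (𝓝 (∫ x in U, {y | u y ≠ 0}.indicator (glDensity p q σ A u) x)) := by
    refine tendsto_integral_filter_of_dominated_convergence _
      (Eventually.of_forall fun N ↦
        (continuous_glDensity hA (contDiff_truncate hU N hu hu0)).aestronglyMeasurable) ?_
      (((((hgrad.add hu2).const_mul C).const_mul |p|).add (hu2.const_mul |q|)).add
        (hu4.const_mul |σ|))
      (ae_of_forall fun x hx ↦ tendsto_glDensity_truncate hU hu.continuous hx)
    filter_upwards [eventually_ge_atTop 1] with N hN using ae_of_forall (hC N hN)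
  have hint : IntegrableOn (glDensity p q σ A u) U :=
    ((hgrad.const_mul p).sub (hu2.const_mul q)).add (hu4.const_mul σ)
  have limit_le : ∫ x in U, {y | u y ≠ 0}.indicator (glDensity p q σ A u) x ≤
      ∫ x in U, glDensity p q σ A u x := by
    have hmeas : MeasurableSet {y | u y ≠ 0} :=
      (isOpen_ne_fun hu.continuous continuous_const).measurableSet
    refine setIntegral_mono (hint.indicator hmeas) hint fun x ↦
      indicator_le' (fun _ _ ↦ le_rfl) (fun y hy ↦ ?_) x
    have hy : u y = 0 := by simpa using hy
    simpa [glDensity, hy] using mul_nonneg hp (magGradSq_nonneg A u y)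
  obtain ⟨N, hlt, hN⟩ := ((hlim.eventually_lt_const
    (limit_le.trans_lt (lt_add_of_pos_right _ hε))).and (eventually_gt_atTop 0)).exists
  have hsub := tsupport_truncate_subset hU N hu.continuous hu0
  refine ⟨truncate U N u, contDiff_truncate hU N hu hu0, hasCompactSupport_truncate U hN u,
    hsub, ?_⟩
  rwa [← setIntegral_glDensity_of_tsupport_subset hsub]

end Truncation

section MagneticLowerBound

section IntegrationByParts

variable {E : Type*} [NormedAddCommGroup E] [NormedSpace ℝ E] [FiniteDimensional ℝ E]
  [MeasurableSpace E] [BorelSpace E] {μ : Measure E} [μ.IsAddHaarMeasure] {p q : E → ℝ}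

lemma integral_mul_fderiv_eq_neg_of_hasCompactSupport (hq : ContDiff ℝ 1 q)
    (hp : ContDiff ℝ 1 p) (hpc : HasCompactSupport p) (e : E) :
    ∫ x, q x * fderiv ℝ p x e ∂μ = -∫ x, fderiv ℝ q x e * p x ∂μ := by
  have hpe := continuous_fderiv_apply_const hp e
  have hqe := continuous_fderiv_apply_const hq e
  exact integral_mul_fderiv_eq_neg_fderiv_mul_of_integrable
    ((hqe.mul hp.continuous).integrable_of_hasCompactSupport hpc.mul_left)
    ((hq.continuous.mul hpe).integrable_of_hasCompactSupport (hpc.fderiv_apply ℝ e).mul_left)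
    ((hq.continuous.mul hp.continuous).integrable_of_hasCompactSupport hpc.mul_left)
    (fun x _ ↦ hq.differentiable one_ne_zero x) fun x _ ↦ hp.differentiable one_ne_zero x

lemma integral_slope_mul_fderiv (hp : ContDiff ℝ 1 p) (hq : ContDiff ℝ 1 q)
    (hpc : HasCompactSupport p) (e f : E) (t : ℝ) :
    ∫ x, (t⁻¹ • (q (x + t • f) - q x)) * fderiv ℝ p x e ∂μ =
      -∫ x, (t⁻¹ • (p (x + t • -f) - p x)) * fderiv ℝ q x e ∂μ := by
  have hpe := continuous_fderiv_apply_const hp e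
  have hqe := continuous_fderiv_apply_const hq e
  have hshift : ContDiff ℝ 1 fun x ↦ q (x + t • f) := hq.comp (contDiff_id.add contDiff_const)
  have hpshift : HasCompactSupport fun x ↦ p (x + t • -f) :=
    hpc.comp_homeomorph (Homeomorph.addRight (t • -f))
  have hpshift_cont : Continuous fun x ↦ p (x + t • -f) := hp.continuous.comp (by fun_prop)
  have integrable_q {r : E → ℝ} (hr : Continuous r) :
      Integrable (fun x ↦ r x * fderiv ℝ p x e) μ :=
    (hr.mul hpe).integrable_of_hasCompactSupport (hpc.fderiv_apply ℝ e).mul_left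
  have integrable_p {r : E → ℝ} (hr : Continuous r) (hrc : HasCompactSupport r) :
      Integrable (fun x ↦ fderiv ℝ q x e * r x) μ :=
    (hqe.mul hr).integrable_of_hasCompactSupport hrc.mul_left
  have translate : ∫ x, fderiv ℝ q (x + t • f) e * p x ∂μ =
      ∫ x, fderiv ℝ q x e * p (x + t • -f) ∂μ := by
    rw [← integral_add_right_eq_self (fun x ↦ fderiv ℝ q x e * p (x + t • -f)) (t • f)]
    simp
  have hparts := integral_mul_fderiv_eq_neg_of_hasCompactSupport (μ := μ) hshift hp hpc e
  simp only [fderiv_comp_add_right, translate] at hparts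
  calc _ = t⁻¹ * ((∫ x, q (x + t • f) * fderiv ℝ p x e ∂μ) - ∫ x, q x * fderiv ℝ p x e ∂μ) := by
        rw [← integral_sub (integrable_q hshift.continuous) (integrable_q hq.continuous),
          ← integral_const_mul]
        simp only [smul_eq_mul, mul_assoc, sub_mul]
    _ = -(t⁻¹ * ((∫ x, fderiv ℝ q x e * p (x + t • -f) ∂μ) - ∫ x, fderiv ℝ q x e * p x ∂μ)) := by
        rw [hparts, integral_mul_fderiv_eq_neg_of_hasCompactSupport hq hp hpc e]
        ring
    _ = _ := by
        rw [← integral_sub (integrable_p hpshift_cont hpshift)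
          (integrable_p hp.continuous hpc), ← integral_const_mul]
        refine congrArg Neg.neg (integral_congr_ae (Eventually.of_forall fun x ↦ ?_))
        simp only [smul_eq_mul]
        ring

-- For `C²` functions this is two integrations by parts; for `C¹` ones, one of the two derivatives
-- is replaced by a difference quotient.
lemma integral_fderiv_mul_fderiv_comm (hp : ContDiff ℝ 1 p) (hq : ContDiff ℝ 1 q)
    (hpc : HasCompactSupport p) (hqc : HasCompactSupport q) (e f : E) :
    ∫ x, fderiv ℝ q x f * fderiv ℝ p x e ∂μ = ∫ x, fderiv ℝ p x f * fderiv ℝ q x e ∂μ := by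
  obtain ⟨_, hpLip⟩ := hp.lipschitzWith_of_hasCompactSupport hpc one_ne_zero
  obtain ⟨_, hqLip⟩ := hq.lipschitzWith_of_hasCompactSupport hqc one_ne_zero
  have hpe : Integrable (fun x ↦ fderiv ℝ p x e) μ :=
    (continuous_fderiv_apply_const hp e).integrable_of_hasCompactSupport (hpc.fderiv_apply ℝ e)
  have hqe : Integrable (fun x ↦ fderiv ℝ q x e) μ :=
    (continuous_fderiv_apply_const hq e).integrable_of_hasCompactSupport (hqc.fderiv_apply ℝ e)
  have hlim := hqLip.integral_inv_smul_sub_mul_tendsto_integral_lineDeriv_mul hpe f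
  simp only [integral_slope_mul_fderiv hp hq hpc] at hlim
  have heq := tendsto_nhds_unique hlim
    (hpLip.integral_inv_smul_sub_mul_tendsto_integral_lineDeriv_mul hqe (-f)).neg
  simpa only [(hq.differentiable one_ne_zero _).lineDeriv_eq_fderiv,
    (hp.differentiable one_ne_zero _).lineDeriv_eq_fderiv, map_neg, neg_mul, integral_neg,
    neg_neg] using heq

lemma integral_inner_I_mul_fderiv_eq_zero {v : E → ℂ} (hv : ContDiff ℝ 1 v)
    (hvc : HasCompactSupport v) (e f : E) :
    ∫ x, inner ℝ (Complex.I * fderiv ℝ v x e) (fderiv ℝ v x f) ∂μ = 0 := by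
  have hre : ContDiff ℝ 1 fun x ↦ (v x).re := Complex.reCLM.contDiff.comp hv
  have him : ContDiff ℝ 1 fun x ↦ (v x).im := Complex.imCLM.contDiff.comp hv
  have hrec : HasCompactSupport fun x ↦ (v x).re := hvc.comp_left (g := Complex.re) rfl
  have himc : HasCompactSupport fun x ↦ (v x).im := hvc.comp_left (g := Complex.im) rfl
  have fderiv_re (x d : E) : fderiv ℝ (fun x ↦ (v x).re) x d = (fderiv ℝ v x d).re :=
    DFunLike.congr_fun (Complex.reCLM.hasFDerivAt.comp x
      (hv.differentiable one_ne_zero x).hasFDerivAt).fderiv d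
  have fderiv_im (x d : E) : fderiv ℝ (fun x ↦ (v x).im) x d = (fderiv ℝ v x d).im :=
    DFunLike.congr_fun (Complex.imCLM.hasFDerivAt.comp x
      (hv.differentiable one_ne_zero x).hasFDerivAt).fderiv d
  have integrable_mul {p q : E → ℝ} (hp : ContDiff ℝ 1 p) (hq : ContDiff ℝ 1 q)
      (hpc : HasCompactSupport p) : Integrable (fun x ↦ fderiv ℝ q x f * fderiv ℝ p x e) μ :=
    ((continuous_fderiv_apply_const hq f).mul
      (continuous_fderiv_apply_const hp e)).integrable_of_hasCompactSupport
      (hpc.fderiv_apply ℝ e).mul_left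
  have expand (x : E) : inner ℝ (Complex.I * fderiv ℝ v x e) (fderiv ℝ v x f) =
      fderiv ℝ (fun x ↦ (v x).im) x f * fderiv ℝ (fun x ↦ (v x).re) x e
        - fderiv ℝ (fun x ↦ (v x).re) x f * fderiv ℝ (fun x ↦ (v x).im) x e := by
    simp [Complex.inner, fderiv_re, fderiv_im]
  simp only [expand]
  rw [integral_sub (integrable_mul hre him hrec) (integrable_mul him hre himc), sub_eq_zero]
  exact integral_fderiv_mul_fderiv_comm hre him hrec himc e f

end IntegrationByParts

variable {v : ℝ × ℝ → ℂ}

-- This is `|D₁ + iD₂|² ≥ 0`; integrated, the two terms on the left are `0` and `∫ x₂|v|²`.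
lemma two_mul_inner_sub_le_magGradSq_Avan (hv : ContDiff ℝ 1 v) (x : ℝ × ℝ) :
    2 * inner ℝ (Complex.I * fderiv ℝ v x (1, 0)) (fderiv ℝ v x (0, 1))
      - x.2 ^ 2 / 2 * fderiv ℝ (fun y ↦ ‖v y‖ ^ 2) x (0, 1) ≤ magGradSq Avan v x := by
  have hfd : fderiv ℝ (fun y ↦ ‖v y‖ ^ 2) x (0, 1) =
      2 * inner ℝ (v x) (fderiv ℝ v x (0, 1)) := by
    rw [(hv.differentiable one_ne_zero x).hasFDerivAt.norm_sq.fderiv]; simp [-Complex.inner]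
  set d₁ := magDeriv Avan v x (1, 0) with hd₁
  set d₂ := magDeriv Avan v x (0, 1) with hd₂
  have cross : 2 * inner ℝ (Complex.I * d₁) d₂ =
      2 * inner ℝ (Complex.I * fderiv ℝ v x (1, 0)) (fderiv ℝ v x (0, 1))
        - x.2 ^ 2 / 2 * fderiv ℝ (fun y ↦ ‖v y‖ ^ 2) x (0, 1) := by
    have hd₁' : d₁ = fderiv ℝ v x (1, 0) - Complex.I * ((-x.2 ^ 2 / 2 : ℝ) : ℂ) * v x := by
      simp [hd₁, magDeriv, Avan]
    have hd₂' : d₂ = fderiv ℝ v x (0, 1) := by simp [hd₂, magDeriv, Avan]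
    rw [hfd, hd₁', hd₂']
    simp only [Complex.inner, Complex.mul_re, Complex.mul_im, Complex.sub_re, Complex.sub_im,
      Complex.I_re, Complex.I_im, Complex.ofReal_re, Complex.ofReal_im, Complex.conj_re,
      Complex.conj_im]
    ring
  have hnorm : ‖Complex.I * d₁‖ = ‖d₁‖ := by simp
  rw [← cross, magGradSq_eq_norm_magDeriv_sq_add]
  have hsq := sq_nonneg ‖Complex.I * d₁ - d₂‖
  rw [norm_sub_sq_real, hnorm] at hsq
  linarith

lemma integral_snd_mul_norm_sq_le (hv : ContDiff ℝ 1 v) (hc : HasCompactSupport v) :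
    ∫ x : ℝ × ℝ, x.2 * ‖v x‖ ^ 2 ≤ ∫ x, magGradSq Avan v x := by
  have hn : ContDiff ℝ 1 fun y ↦ ‖v y‖ ^ 2 := hv.norm_sq ℝ
  have hnc : HasCompactSupport fun y ↦ ‖v y‖ ^ 2 :=
    hc.comp_left (g := fun z : ℂ ↦ ‖z‖ ^ 2) (by simp)
  have hw : ContDiff ℝ 1 fun y : ℝ × ℝ ↦ y.2 ^ 2 / 2 := by fun_prop
  have fderiv_w (x : ℝ × ℝ) : fderiv ℝ (fun y : ℝ × ℝ ↦ y.2 ^ 2 / 2) x (0, 1) = x.2 := by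
    have h := ((hasFDerivAt_snd (𝕜 := ℝ) (p := x)).pow 2).mul_const (2⁻¹ : ℝ)
    simp only [div_eq_mul_inv, h.fderiv]
    simp
  have parts := integral_mul_fderiv_eq_neg_of_hasCompactSupport (μ := volume) hw hn hnc (0, 1)
  simp only [fderiv_w] at parts
  have hcross : Integrable fun x ↦
      inner ℝ (Complex.I * fderiv ℝ v x (1, 0)) (fderiv ℝ v x (0, 1)) := by
    have := continuous_fderiv_apply_const hv (1, 0)
    have := continuous_fderiv_apply_const hv (0, 1)
    refine (by fun_prop : Continuous _).integrable_of_hasCompactSupport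
      ((hc.fderiv_apply ℝ (1, 0)).mono fun x hx h ↦ hx ?_)
    simp [show fderiv ℝ v x (1, 0) = 0 from h]
  have hparts : Integrable fun x : ℝ × ℝ ↦
      x.2 ^ 2 / 2 * fderiv ℝ (fun y ↦ ‖v y‖ ^ 2) x (0, 1) :=
    (hw.continuous.mul (continuous_fderiv_apply_const hn _)).integrable_of_hasCompactSupport
      (hnc.fderiv_apply ℝ _).mul_left
  have hmag : Integrable (magGradSq Avan v) :=
    (continuous_magGradSq continuous_Avan hv).integrable_of_hasCompactSupport
      (hasCompactSupport_magGradSq hc)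
  calc ∫ x : ℝ × ℝ, x.2 * ‖v x‖ ^ 2 =
      ∫ x, (2 * inner ℝ (Complex.I * fderiv ℝ v x (1, 0)) (fderiv ℝ v x (0, 1))
        - x.2 ^ 2 / 2 * fderiv ℝ (fun y ↦ ‖v y‖ ^ 2) x (0, 1)) := by
        rw [integral_sub (hcross.const_mul 2) hparts, integral_const_mul,
          integral_inner_I_mul_fderiv_eq_zero hv hc, parts]
        ring
    _ ≤ ∫ x, magGradSq Avan v x :=
        integral_mono ((hcross.const_mul 2).sub hparts) hmag
          (two_mul_inner_sub_le_magGradSq_Avan hv)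

end MagneticLowerBound

section Reflection

variable {v : ℝ × ℝ → ℂ} {p q σ : ℝ}

/-- The reflection `(x₁, x₂) ↦ (x₁, -x₂)`. It exchanges the two half-planes on which the field
`B(x) = x₂` has constant sign. -/
def reflectSnd : (ℝ × ℝ) ≃L[ℝ] (ℝ × ℝ) :=
  (ContinuousLinearEquiv.refl ℝ ℝ).prodCongr (ContinuousLinearEquiv.neg ℝ)

@[simp] lemma reflectSnd_apply (x : ℝ × ℝ) : reflectSnd x = (x.1, -x.2) := rfl

lemma measurePreserving_reflectSnd : MeasurePreserving reflectSnd :=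
  (MeasurePreserving.id volume).prod (Measure.measurePreserving_neg volume)

lemma magGradSq_comp_reflectSnd (v : ℝ × ℝ → ℂ) (x : ℝ × ℝ) :
    magGradSq Avan (v ∘ reflectSnd) x = magGradSq Avan v (reflectSnd x) := by
  have fderiv_snd : fderiv ℝ v (reflectSnd x) (0, -1) = -fderiv ℝ v (reflectSnd x) (0, 1) := by
    rw [← map_neg]; simp
  rw [reflectSnd_apply] at fderiv_snd
  simp [magGradSq, reflectSnd.comp_right_fderiv, Avan, fderiv_snd]

lemma integral_glDensity_comp_reflectSnd (v : ℝ × ℝ → ℂ) :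
    ∫ x, glDensity p q σ Avan (v ∘ reflectSnd) x = ∫ x, glDensity p q σ Avan v x := by
  have pointwise (x : ℝ × ℝ) : glDensity p q σ Avan (v ∘ reflectSnd) x =
      glDensity p q σ Avan v (reflectSnd x) := by
    rw [glDensity, magGradSq_comp_reflectSnd]; rfl
  simp only [pointwise]
  exact measurePreserving_reflectSnd.integral_comp
    reflectSnd.toHomeomorph.measurableEmbedding _

lemma tsupport_comp_reflectSnd (v : ℝ × ℝ → ℂ) :
    tsupport (v ∘ reflectSnd) = reflectSnd ⁻¹' tsupport v :=
  tsupport_comp_eq_preimage v reflectSnd.toHomeomorph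

end Reflection

section SquareEnergy

variable {A : ℝ × ℝ → ℝ × ℝ} {u w : ℝ × ℝ → ℂ} {b b' r p q σ : ℝ} {x : ℝ × ℝ}

lemma isOpen_Qsq (r : ℝ) : IsOpen (Qsq r) := isOpen_Ioo.prod isOpen_Ioo

lemma Qsq_subset_Icc_prod_Icc (r : ℝ) :
    Qsq r ⊆ Icc (-r / 2) (r / 2) ×ˢ Icc (-r / 2) (r / 2) :=
  prod_mono Ioo_subset_Icc_self Ioo_subset_Icc_self

lemma hasCompactSupport_of_tsupport_subset_Qsq (h : tsupport u ⊆ Qsq r) : HasCompactSupport u :=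
  (isCompact_Icc.prod isCompact_Icc).of_isClosed_subset (isClosed_tsupport u)
    (h.trans (Qsq_subset_Icc_prod_Icc r))

lemma integrableOn_Qsq {f : ℝ × ℝ → ℝ} (hf : Continuous f) (r : ℝ) : IntegrableOn f (Qsq r) :=
  (hf.continuousOn.integrableOn_compact (isCompact_Icc.prod isCompact_Icc)).mono_set
    (Qsq_subset_Icc_prod_Icc r)

lemma measureReal_Qsq_le (r : ℝ) : volume.real (Qsq r) ≤ r ^ 2 := by
  rw [Qsq, Measure.volume_eq_prod, measureReal_prod_prod, volume_real_Ioo,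
    show r / 2 - -r / 2 = r by ring, ← sq]
  rcases le_total r 0 with h | h
  · simp [max_eq_right h, sq_nonneg]
  · rw [max_eq_left h]

lemma Fsq_eq_setIntegral_glDensity (b r : ℝ) (u : ℝ × ℝ → ℂ) :
    Fsq b r u = ∫ x in Qsq r, glDensity b 1 (1 / 2) A₀ u x := by
  simp only [Fsq, glDensity, one_mul, div_mul_eq_mul_div]

lemma neg_sq_div_two_le_Fsq (hb : 0 ≤ b) (r : ℝ) (hu : ContDiff ℝ 1 u) :
    -r ^ 2 / 2 ≤ Fsq b r u := by
  have pointwise (x : ℝ × ℝ) : -1 / 2 ≤ glDensity b 1 (1 / 2) A₀ u x := by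
    have := mul_nonneg hb (magGradSq_nonneg A₀ u x)
    unfold glDensity
    nlinarith [sq_nonneg (‖u x‖ ^ 2 - 1)]
  have hmono : ∫ x in Qsq r, (-1 / 2 : ℝ) ≤ ∫ x in Qsq r, glDensity b 1 (1 / 2) A₀ u x :=
    setIntegral_mono (integrableOn_Qsq continuous_const r)
      (integrableOn_Qsq (continuous_glDensity continuous_A₀ hu) r) pointwise
  rw [setIntegral_const, smul_eq_mul] at hmono
  rw [Fsq_eq_setIntegral_glDensity]
  linarith [measureReal_Qsq_le r]

lemma memH10sq_zero (r : ℝ) : MemH10sq r fun _ ↦ 0 := ⟨contDiff_const, fun _ _ ↦ rfl⟩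

lemma nonempty_image_Fsq (b r : ℝ) : (Fsq b r '' {u | MemH10sq r u}).Nonempty :=
  ⟨_, _, memH10sq_zero r, rfl⟩

lemma eD_le_Fsq (hb : 0 ≤ b) (hu : MemH10sq r u) : eD b r ≤ Fsq b r u := by
  refine csInf_le ⟨-r ^ 2 / 2, ?_⟩ ⟨u, hu, rfl⟩
  rintro _ ⟨v, hv, rfl⟩
  exact neg_sq_div_two_le_Fsq hb r hv.1

lemma eD_nonpos (hb : 0 ≤ b) (r : ℝ) : eD b r ≤ 0 :=
  (eD_le_Fsq hb (memH10sq_zero r)).trans_eq (by simp [Fsq_eq_setIntegral_glDensity])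

lemma neg_sq_div_two_le_eD (hb : 0 ≤ b) (r : ℝ) : -r ^ 2 / 2 ≤ eD b r := by
  refine le_csInf (nonempty_image_Fsq b r) ?_
  rintro _ ⟨u, hu, rfl⟩
  exact neg_sq_div_two_le_Fsq hb r hu.1

lemma eD_mono (hb : 0 ≤ b) (h : b ≤ b') (r : ℝ) : eD b r ≤ eD b' r := by
  refine le_csInf (nonempty_image_Fsq b' r) ?_
  rintro _ ⟨u, hu, rfl⟩
  refine (eD_le_Fsq hb hu).trans ?_
  have hint (c : ℝ) := integrableOn_Qsq
    (continuous_glDensity (p := c) (q := 1) (σ := 1 / 2) continuous_A₀ hu.1) r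
  rw [Fsq_eq_setIntegral_glDensity, Fsq_eq_setIntegral_glDensity]
  refine setIntegral_mono (hint b) (hint b') fun x ↦ ?_
  have := magGradSq_nonneg A₀ u x
  unfold glDensity
  gcongr

-- `-q s² + σ s⁴` is minimal at this amplitude, so the rescaled density is minimal at `|u| = 1`.
lemma glDensity_sqrt_smul (p : ℝ) (hq : 0 < q) (hσ : 0 < σ) (A : ℝ × ℝ → ℝ × ℝ)
    (hu : DifferentiableAt ℝ u x) :
    glDensity p q σ A (fun y ↦ √(q / (2 * σ)) • u y) x =
      q ^ 2 / (2 * σ) * glDensity (p / q) 1 (1 / 2) A u x := by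
  have hsq : √(q / (2 * σ)) ^ 2 = q / (2 * σ) := sq_sqrt (by positivity)
  have hfour : √(q / (2 * σ)) ^ 4 = (q / (2 * σ)) ^ 2 := by
    rw [show 4 = 2 * 2 from rfl, pow_mul, hsq]
  rw [glDensity_const_smul _ hu, hsq, hfour, glDensity, glDensity]
  field_simp

lemma mul_eD_le_integral_glDensity (hp : 0 ≤ p) (hq : 0 < q) (hσ : 0 < σ) (hw : ContDiff ℝ 1 w)
    (hws : tsupport w ⊆ Qsq r) :
    q ^ 2 / (2 * σ) * eD (p / q) r ≤ ∫ x, glDensity p q σ A₀ w x := by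
  set c := √(q / (2 * σ))
  have hc : c ≠ 0 := (sqrt_pos.2 (by positivity)).ne'
  set u : ℝ × ℝ → ℂ := fun y ↦ c⁻¹ • w y
  have hu : ContDiff ℝ 1 u := contDiff_const.fun_smul hw
  have hus : tsupport u ⊆ Qsq r := (tsupport_smul_subset_right (fun _ ↦ c⁻¹) w).trans hws
  have hu0 : MemH10sq r u := ⟨hu, fun x hx ↦ image_eq_zero_of_notMem_tsupport fun h ↦
    ((isOpen_Qsq r).frontier_eq ▸ hx).2 (hus h)⟩
  have hw_eq : w = fun y ↦ c • u y := by
    ext1 y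
    exact (smul_inv_smul₀ hc (w y)).symm
  calc q ^ 2 / (2 * σ) * eD (p / q) r ≤ q ^ 2 / (2 * σ) * Fsq (p / q) r u := by
        gcongr
        exact eD_le_Fsq (by positivity) hu0
    _ = ∫ x, q ^ 2 / (2 * σ) * glDensity (p / q) 1 (1 / 2) A₀ u x := by
        rw [Fsq_eq_setIntegral_glDensity, setIntegral_glDensity_of_tsupport_subset hus,
          integral_const_mul]
    _ = _ := by
        simp only [hw_eq, c,
          glDensity_sqrt_smul p hq hσ A₀ (hu.differentiable one_ne_zero _)]

lemma exists_integral_glDensity_lt (hp : 0 ≤ p) (hq : 0 < q) (hσ : 0 < σ) (r : ℝ) {δ : ℝ}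
    (hδ : 0 < δ) :
    ∃ w : ℝ × ℝ → ℂ, ContDiff ℝ 1 w ∧ tsupport w ⊆ Qsq r ∧
      ∫ x, glDensity p q σ A₀ w x < q ^ 2 / (2 * σ) * eD (p / q) r + δ := by
  set η := δ / (2 * (q ^ 2 / (2 * σ))) with hη
  have hη0 : 0 < η := by positivity
  obtain ⟨_, ⟨u, hu, rfl⟩, hlt⟩ := exists_lt_of_csInf_lt (nonempty_image_Fsq (p / q) r)
    (lt_add_of_pos_right (eD (p / q) r) hη0)
  have := hu.1.continuous
  obtain ⟨v, hv, -, hvs, hvlt⟩ := exists_hasCompactSupport_integral_glDensity_lt (isOpen_Qsq r)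
    continuous_A₀ hu.1 hu.2 (integrableOn_Qsq (by fun_prop) r) (integrableOn_Qsq (by fun_prop) r)
    (integrableOn_Qsq (continuous_magGradSq continuous_A₀ hu.1) r) (q := 1) (σ := 1 / 2)
    (div_nonneg hp hq.le) hη0
  rw [← Fsq_eq_setIntegral_glDensity] at hvlt
  refine ⟨fun y ↦ √(q / (2 * σ)) • v y, contDiff_const.fun_smul hv,
    (tsupport_smul_subset_right (fun _ ↦ √(q / (2 * σ))) v).trans hvs, ?_⟩
  simp only [glDensity_sqrt_smul p hq hσ A₀ (hv.differentiable one_ne_zero _)]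
  rw [integral_const_mul]
  calc _ < q ^ 2 / (2 * σ) * (eD (p / q) r + η + η) := by
        gcongr
        exact hvlt.trans (by gcongr)
    _ = _ := by rw [hη]; field_simp; ring

end SquareEnergy

section GaugeTransformation

variable {a x : ℝ × ℝ} {s t ε p q q' σ : ℝ} {v w : ℝ × ℝ → ℂ}

/-- The gauge phase that turns `Avan`, near the point `a`, into the potential `t A₀(· - a)` of the
constant field `t`. -/
def gaugePhase (a : ℝ × ℝ) (t : ℝ) (x : ℝ × ℝ) : ℝ :=
  -t * (x.1 - a.1) * (x.2 - a.2) / 2 - a.2 ^ 2 * (x.1 - a.1) / 2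

/-- The first component of `Avan - ∇(gaugePhase a t) - t A₀(· - a)`; the second one vanishes. -/
def potentialError (a : ℝ × ℝ) (t : ℝ) (x : ℝ × ℝ) : ℝ :=
  (t - a.2) * (x.2 - a.2) - (x.2 - a.2) ^ 2 / 2

/-- The transplantation to the unit square centred at `a` of a function `w` on the square `Qsq s`:
`w` is rescaled, which turns the unit field into the field `s²`, and gauge transformed. -/
def magTransplant (a : ℝ × ℝ) (s : ℝ) (w : ℝ × ℝ → ℂ) (x : ℝ × ℝ) : ℂ :=
  Complex.exp (Complex.I * gaugePhase a (s ^ 2) x) * w (s • (x - a))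

lemma contDiff_gaugePhase (a : ℝ × ℝ) (t : ℝ) : ContDiff ℝ 1 (gaugePhase a t) := by
  unfold gaugePhase; fun_prop

lemma contDiff_cexp_mul_gaugePhase (c : ℂ) (a : ℝ × ℝ) (t : ℝ) :
    ContDiff ℝ 1 fun x ↦ Complex.exp (c * gaugePhase a t x) :=
  (contDiff_const.mul (Complex.ofRealCLM.contDiff.comp (contDiff_gaugePhase a t))).cexp

lemma contDiff_magTransplant (a : ℝ × ℝ) (s : ℝ) (hw : ContDiff ℝ 1 w) :
    ContDiff ℝ 1 (magTransplant a s w) :=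
  (contDiff_cexp_mul_gaugePhase _ a _).mul (hw.comp (by fun_prop))

lemma fderiv_gaugePhase (a : ℝ × ℝ) (t : ℝ) (x e : ℝ × ℝ) :
    fderiv ℝ (gaugePhase a t) x e =
      -t / 2 * ((x.1 - a.1) * e.2 + (x.2 - a.2) * e.1) - a.2 ^ 2 / 2 * e.1 := by
  have h₁ : HasFDerivAt (fun y : ℝ × ℝ ↦ y.1 - a.1) _ x :=
    (hasFDerivAt_fst (𝕜 := ℝ)).sub_const _
  have h₂ : HasFDerivAt (fun y : ℝ × ℝ ↦ y.2 - a.2) _ x :=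
    (hasFDerivAt_snd (𝕜 := ℝ)).sub_const _
  have h : HasFDerivAt (gaugePhase a t) _ x :=
    (((h₁.mul h₂).const_mul (-t / 2)).sub (h₁.const_mul (a.2 ^ 2 / 2))).congr_of_eventuallyEq
      (Eventually.of_forall fun y ↦ by simp [gaugePhase]; ring)
  rw [h.fderiv]
  simp
  ring

lemma fderiv_magTransplant (a : ℝ × ℝ) (s : ℝ) (hw : ContDiff ℝ 1 w) (x e : ℝ × ℝ) :
    fderiv ℝ (magTransplant a s w) x e = Complex.exp (Complex.I * gaugePhase a (s ^ 2) x) *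
      (s * fderiv ℝ w (s • (x - a)) e
        + Complex.I * (fderiv ℝ (gaugePhase a (s ^ 2)) x e : ℂ) * w (s • (x - a))) := by
  have hscale : HasFDerivAt (fun y ↦ w (s • (y - a))) _ x :=
    (hw.differentiable one_ne_zero (s • (x - a))).hasFDerivAt.comp x
      (((hasFDerivAt_id x).sub_const a).const_smul s)
  have hphase : HasFDerivAt (fun y ↦ (gaugePhase a (s ^ 2) y : ℂ)) _ x :=
    Complex.ofRealCLM.hasFDerivAt.comp x
      ((contDiff_gaugePhase a (s ^ 2)).differentiable one_ne_zero x).hasFDerivAt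
  have h : HasFDerivAt (magTransplant a s w) _ x :=
    (hphase.const_mul Complex.I).cexp.mul hscale
  rw [h.fderiv]
  simp
  ring

lemma magDeriv_magTransplant (a : ℝ × ℝ) (s : ℝ) (hw : ContDiff ℝ 1 w) (x e : ℝ × ℝ) :
    magDeriv Avan (magTransplant a s w) x e =
      Complex.exp (Complex.I * gaugePhase a (s ^ 2) x) * (s * magDeriv A₀ w (s • (x - a)) e
        - Complex.I * (potentialError a (s ^ 2) x * e.1 : ℝ) * w (s • (x - a))) := by
  rw [magDeriv, fderiv_magTransplant a s hw, fderiv_gaugePhase, magDeriv, magTransplant]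
  simp [Avan, A₀, potentialError]
  ring

lemma norm_magTransplant (a : ℝ × ℝ) (s : ℝ) (w : ℝ × ℝ → ℂ) (x : ℝ × ℝ) :
    ‖magTransplant a s w x‖ = ‖w (s • (x - a))‖ := by
  rw [magTransplant, norm_mul, Complex.norm_exp_I_mul_ofReal, one_mul]

lemma smul_sub_mem_Qsq_iff (hs : 0 < s) : s • (x - a) ∈ Qsq s ↔ x ∈ Metric.ball a (1 / 2) := by
  simp only [Qsq, mem_prod, mem_Ioo, Metric.mem_ball, Prod.dist_eq, Real.dist_eq, max_lt_iff,
    abs_lt, Prod.smul_fst, Prod.smul_snd, Prod.fst_sub, Prod.snd_sub, smul_eq_mul]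
  constructor <;> rintro ⟨⟨h₁, h₂⟩, h₃, h₄⟩ <;> refine ⟨⟨?_, ?_⟩, ?_, ?_⟩ <;> nlinarith

lemma hasCompactSupport_of_tsupport_subset_ball {r : ℝ} (h : tsupport v ⊆ Metric.ball a r) :
    HasCompactSupport v :=
  (isCompact_closedBall a r).of_isClosed_subset (isClosed_tsupport v)
    (h.trans Metric.ball_subset_closedBall)

lemma tsupport_magTransplant_subset_ball (hs : 0 < s) (hws : tsupport w ⊆ Qsq s) :
    tsupport (magTransplant a s w) ⊆ Metric.ball a (1 / 2) := fun _ hx ↦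
  (smul_sub_mem_Qsq_iff hs).1 (hws (tsupport_comp_subset_preimage w
    (by fun_prop : Continuous fun x ↦ s • (x - a)) (tsupport_mul_subset_right hx)))

lemma exists_magTransplant_eq (hs : 0 < s) (hv : ContDiff ℝ 1 v)
    (hvs : tsupport v ⊆ Metric.ball a (1 / 2)) :
    ∃ w, ContDiff ℝ 1 w ∧ tsupport w ⊆ Qsq s ∧ magTransplant a s w = v := by
  have hunscale : ContDiff ℝ 1 fun z : ℝ × ℝ ↦ a + s⁻¹ • z := by fun_prop
  refine ⟨fun z ↦ Complex.exp (-Complex.I * gaugePhase a (s ^ 2) (a + s⁻¹ • z)) *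
      v (a + s⁻¹ • z), ((contDiff_cexp_mul_gaugePhase _ a _).comp hunscale).mul
      (hv.comp hunscale), fun z hz ↦ ?_, ?_⟩
  · have hball : a + s⁻¹ • z ∈ Metric.ball a (1 / 2) :=
      hvs (tsupport_comp_subset_preimage v hunscale.continuous (tsupport_mul_subset_right hz))
    simpa [smul_inv_smul₀ hs.ne'] using (smul_sub_mem_Qsq_iff hs).2 hball
  · ext x
    simp only [magTransplant, inv_smul_smul₀ hs.ne', add_sub_cancel]
    rw [← mul_assoc, ← Complex.exp_add]
    simp

lemma abs_potentialError_le_one (h : |a.2 - t| ≤ 1) (hx : x ∈ Metric.ball a (1 / 2)) :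
    |potentialError a t x| ≤ 1 := by
  simp only [Metric.mem_ball, Prod.dist_eq, Real.dist_eq, max_lt_iff, abs_lt] at hx
  obtain ⟨-, hlow, hupp⟩ := hx
  rw [abs_le] at h ⊢
  unfold potentialError
  constructor <;> nlinarith

lemma sq_le_of_le_add {a b c ε : ℝ} (ha : 0 ≤ a) (h : a ≤ b + c) (hε : 0 < ε) :
    a ^ 2 ≤ (1 + ε) * b ^ 2 + (1 + 1 / ε) * c ^ 2 := by
  have hsq : a ^ 2 ≤ (b + c) ^ 2 := by gcongr
  have hid : (1 + ε) * b ^ 2 + (1 + 1 / ε) * c ^ 2 - (b + c) ^ 2 = (ε * b - c) ^ 2 / ε := by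
    field_simp; ring
  have : 0 ≤ (ε * b - c) ^ 2 / ε := by positivity
  linarith

lemma magGradSq_magTransplant (a : ℝ × ℝ) (s : ℝ) (hw : ContDiff ℝ 1 w) (x : ℝ × ℝ) :
    magGradSq Avan (magTransplant a s w) x =
      ‖s * magDeriv A₀ w (s • (x - a)) (1, 0)
        - Complex.I * potentialError a (s ^ 2) x * w (s • (x - a))‖ ^ 2
      + s ^ 2 * ‖magDeriv A₀ w (s • (x - a)) (0, 1)‖ ^ 2 := by
  simp [magGradSq_eq_norm_magDeriv_sq_add, magDeriv_magTransplant a s hw, mul_pow]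

lemma norm_I_mul_potentialError_mul_le (hs : 0 < s) (h : |a.2 - s ^ 2| ≤ 1)
    (hws : tsupport w ⊆ Qsq s) (x : ℝ × ℝ) :
    ‖Complex.I * potentialError a (s ^ 2) x * w (s • (x - a))‖ ≤ ‖w (s • (x - a))‖ := by
  by_cases hx : s • (x - a) ∈ Qsq s
  · rw [norm_mul, norm_mul, Complex.norm_I, one_mul, Complex.norm_real]
    exact mul_le_of_le_one_left (norm_nonneg _)
      (abs_potentialError_le_one h ((smul_sub_mem_Qsq_iff hs).1 hx))
  · simp [image_eq_zero_of_notMem_tsupport fun hz ↦ hx (hws hz)]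

lemma magGradSq_magTransplant_le (hs : 0 < s) (h : |a.2 - s ^ 2| ≤ 1) (hw : ContDiff ℝ 1 w)
    (hws : tsupport w ⊆ Qsq s) (hε : 0 < ε) (x : ℝ × ℝ) :
    magGradSq Avan (magTransplant a s w) x ≤
      (1 + ε) * (s ^ 2 * magGradSq A₀ w (s • (x - a)))
        + (1 + 1 / ε) * ‖w (s • (x - a))‖ ^ 2 := by
  have triangle := (norm_sub_le (s * magDeriv A₀ w (s • (x - a)) (1, 0)) _).trans
    (add_le_add_right (norm_I_mul_potentialError_mul_le hs h hws x) _)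
  have young := sq_le_of_le_add (norm_nonneg _) triangle hε
  rw [norm_mul, Complex.norm_real, mul_pow, norm_eq_abs, sq_abs] at young
  rw [magGradSq_magTransplant a s hw, magGradSq_eq_norm_magDeriv_sq_add A₀]
  have : 0 ≤ ε * (s ^ 2 * ‖magDeriv A₀ w (s • (x - a)) (0, 1)‖ ^ 2) := by positivity
  linarith

lemma mul_magGradSq_le_magGradSq_magTransplant (hs : 0 < s) (h : |a.2 - s ^ 2| ≤ 1)
    (hw : ContDiff ℝ 1 w) (hws : tsupport w ⊆ Qsq s) (hε : 0 < ε) (x : ℝ × ℝ) :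
    s ^ 2 * magGradSq A₀ w (s • (x - a)) ≤
      (1 + ε) * magGradSq Avan (magTransplant a s w) x
        + (1 + 1 / ε) * ‖w (s • (x - a))‖ ^ 2 := by
  have triangle := (norm_le_norm_sub_add (s * magDeriv A₀ w (s • (x - a)) (1, 0)) _).trans
    (add_le_add_right (norm_I_mul_potentialError_mul_le hs h hws x) _)
  have young := sq_le_of_le_add (norm_nonneg _) triangle hε
  rw [norm_mul, Complex.norm_real, mul_pow, norm_eq_abs, sq_abs] at young
  rw [magGradSq_magTransplant a s hw, magGradSq_eq_norm_magDeriv_sq_add A₀]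
  have : 0 ≤ ε * (s ^ 2 * ‖magDeriv A₀ w (s • (x - a)) (0, 1)‖ ^ 2) := by positivity
  linarith

lemma integral_comp_smul_sub (a : ℝ × ℝ) (s : ℝ) (f : ℝ × ℝ → ℝ) :
    ∫ x, f (s • (x - a)) = (s ^ 2)⁻¹ * ∫ z, f z := by
  rw [integral_sub_right_eq_self (fun x ↦ f (s • x)) a, Measure.integral_comp_smul]
  simp

lemma integral_glDensity_magTransplant_le (hs : 0 < s) (h : |a.2 - s ^ 2| ≤ 1)
    (hw : ContDiff ℝ 1 w) (hws : tsupport w ⊆ Qsq s) (hε : 0 < ε) (hp : 0 ≤ p)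
    (hq : q' + p * (1 + 1 / ε) ≤ q) :
    ∫ x, glDensity p q σ Avan (magTransplant a s w) x ≤
      (s ^ 2)⁻¹ * ∫ z, glDensity ((1 + ε) * p * s ^ 2) q' σ A₀ w z := by
  rw [← integral_comp_smul_sub a]
  refine integral_mono
    (integrable_glDensity continuous_Avan (contDiff_magTransplant a s hw)
      (hasCompactSupport_of_tsupport_subset_ball (tsupport_magTransplant_subset_ball hs hws)))
    (((integrable_glDensity continuous_A₀ hw
      (hasCompactSupport_of_tsupport_subset_Qsq hws)).comp_smul hs.ne').comp_sub_right a)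
    fun x ↦ ?_
  have hmag := mul_le_mul_of_nonneg_left (magGradSq_magTransplant_le hs h hw hws hε x) hp
  have hpot := mul_le_mul_of_nonneg_right hq (sq_nonneg ‖w (s • (x - a))‖)
  simp only [glDensity, norm_magTransplant]
  linarith

lemma le_integral_glDensity_magTransplant (hs : 0 < s) (h : |a.2 - s ^ 2| ≤ 1)
    (hw : ContDiff ℝ 1 w) (hws : tsupport w ⊆ Qsq s) (hε : 0 < ε) (hp : 0 ≤ p)
    (hq : q + p / ε ≤ q') :
    (s ^ 2)⁻¹ * ∫ z, glDensity (p * s ^ 2 / (1 + ε)) q' σ A₀ w z ≤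
      ∫ x, glDensity p q σ Avan (magTransplant a s w) x := by
  rw [← integral_comp_smul_sub a]
  refine integral_mono
    (((integrable_glDensity continuous_A₀ hw
      (hasCompactSupport_of_tsupport_subset_Qsq hws)).comp_smul hs.ne').comp_sub_right a)
    (integrable_glDensity continuous_Avan (contDiff_magTransplant a s hw)
      (hasCompactSupport_of_tsupport_subset_ball (tsupport_magTransplant_subset_ball hs hws)))
    fun x ↦ ?_
  have hmag := mul_le_mul_of_nonneg_left (mul_magGradSq_le_magGradSq_magTransplant hs h hw hws hε x)
    (by positivity : 0 ≤ p / (1 + ε))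
  have hcoef : p / (1 + ε) * (1 + 1 / ε) = p / ε := by field_simp; ring
  have hcancel : p / (1 + ε) * (1 + ε) = p := by field_simp
  rw [mul_add, ← mul_assoc _ (1 + ε), ← mul_assoc _ (1 + 1 / ε), hcoef, hcancel, ← mul_assoc,
    div_mul_eq_mul_div] at hmag
  have hpot := mul_le_mul_of_nonneg_right hq (sq_nonneg ‖w (s • (x - a))‖)
  simp only [glDensity, norm_magTransplant]
  linarith

end GaugeTransformation

section UnitSquares

variable {lam ε t μ δ : ℝ} {a : ℝ × ℝ} {v : ℝ × ℝ → ℂ}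

theorem exists_integral_glDensity_le_eD (hlam : 0 < lam) (hε : 0 < ε) (hε1 : ε < 1)
    (hle : 1 + 1 / ε ≤ ε * lam) (ht : 0 < t) (ha : |a.2 - t| ≤ 1) (hδ : 0 < δ) :
    ∃ v : ℝ × ℝ → ℂ, ContDiff ℝ 1 v ∧ tsupport v ⊆ Metric.ball a (1 / 2) ∧
      ∫ x, glDensity 1 lam (lam / 2) Avan v x ≤
        lam * (1 - ε) ^ 2 * (eD (t / lam * ((1 + ε) / (1 - ε))) (√t) / t) + δ := by
  have hs : 0 < √t := sqrt_pos.2 ht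
  have hst : √t ^ 2 = t := sq_sqrt ht.le
  have h1ε : 0 < 1 - ε := by linarith
  obtain ⟨w, hw, hws, hwlt⟩ := exists_integral_glDensity_lt
    (p := (1 + ε) * 1 * √t ^ 2) (q := lam * (1 - ε)) (σ := lam / 2) (by positivity)
    (by positivity) (by positivity) (√t) (mul_pos hδ ht)
  refine ⟨magTransplant a (√t) w, contDiff_magTransplant a _ hw,
    tsupport_magTransplant_subset_ball hs hws, ?_⟩
  refine (integral_glDensity_magTransplant_le hs (by rwa [hst]) hw hws hε zero_le_one
    (by linarith : lam * (1 - ε) + 1 * (1 + 1 / ε) ≤ lam)).trans ?_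
  rw [hst] at hwlt ⊢
  calc _ ≤ t⁻¹ * ((lam * (1 - ε)) ^ 2 / (2 * (lam / 2)) *
          eD ((1 + ε) * 1 * t / (lam * (1 - ε))) (√t) + δ * t) := by gcongr
    _ = _ := by
        rw [show (1 + ε) * 1 * t / (lam * (1 - ε)) = t / lam * ((1 + ε) / (1 - ε)) by field_simp]
        field_simp

theorem eD_le_integral_glDensity (hlam : 0 < lam) (hε : 0 < ε) (hle : μ + 1 / ε ≤ (1 + ε) * lam)
    (ht : 0 < t) (ha : |a.2 - t| ≤ 1) (hv : ContDiff ℝ 1 v)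
    (hvs : tsupport v ⊆ Metric.ball a (1 / 2)) :
    lam * (1 + ε) ^ 2 * (eD (t / lam / (1 + ε) ^ 2) (√t) / t) ≤
      ∫ x, glDensity 1 μ (lam / 2) Avan v x := by
  have hs : 0 < √t := sqrt_pos.2 ht
  have hst : √t ^ 2 = t := sq_sqrt ht.le
  obtain ⟨w, hw, hws, rfl⟩ := exists_magTransplant_eq hs hv hvs
  refine le_trans ?_ (le_integral_glDensity_magTransplant hs (by rwa [hst]) hw hws hε
    zero_le_one hle)
  rw [hst]
  calc _ = t⁻¹ * (((1 + ε) * lam) ^ 2 / (2 * (lam / 2)) *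
          eD (1 * t / (1 + ε) / ((1 + ε) * lam)) (√t)) := by
        rw [show 1 * t / (1 + ε) / ((1 + ε) * lam) = t / lam / (1 + ε) ^ 2 by field_simp]
        field_simp
    _ ≤ _ := by
        gcongr
        exact mul_eD_le_integral_glDensity (by positivity) (by positivity) (by positivity) hw hws

end UnitSquares

section Localization

lemma integrable_comp_sub_mul {G : Type*} [AddGroup G] [MeasurableSpace G] [MeasurableAdd₂ G]
    [MeasurableNeg G] {μ : Measure G} [SFinite μ] [μ.IsAddLeftInvariant] [μ.IsAddRightInvariant]
    [μ.IsNegInvariant] {φ ψ : G → ℝ} (hφ : Integrable φ μ) (hψ : Integrable ψ μ) :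
    Integrable (fun z : G × G ↦ φ (z.2 - z.1) * ψ z.2) (μ.prod μ) :=
  (hψ.convolution_integrand (ContinuousLinearMap.mul ℝ ℝ) hφ.comp_neg).congr
    (Eventually.of_forall fun z ↦ by simp [mul_comm])

lemma integral_integral_sum_comp_sub_mul {G ι : Type*} [AddGroup G] [MeasurableSpace G]
    [MeasurableAdd₂ G] [MeasurableNeg G] {μ : Measure G} [SFinite μ] [μ.IsAddLeftInvariant]
    [μ.IsAddRightInvariant] [μ.IsNegInvariant] {φ ψ : ι → G → ℝ} (s : Finset ι)
    (hφ : ∀ i ∈ s, Integrable (φ i) μ) (hψ : ∀ i ∈ s, Integrable (ψ i) μ) :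
    ∫ a, ∫ x, ∑ i ∈ s, φ i (x - a) * ψ i x ∂μ ∂μ = ∑ i ∈ s, (∫ y, φ i y ∂μ) * ∫ x, ψ i x ∂μ := by
  rw [integral_integral_swap (integrable_finsetSum s fun i hi ↦
    integrable_comp_sub_mul (hφ i hi) (hψ i hi))]
  have inner_integral (x : G) : ∫ a, ∑ i ∈ s, φ i (x - a) * ψ i x ∂μ =
      ∑ i ∈ s, (∫ y, φ i y ∂μ) * ψ i x := by
    rw [integral_finsetSum s fun i hi ↦ ((hφ i hi).comp_sub_left x).mul_const _]
    simp only [integral_mul_const, integral_sub_left_eq_self]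
  simp only [inner_integral]
  rw [integral_finsetSum s fun i hi ↦ (hψ i hi).const_mul _]
  simp only [integral_const_mul]

variable {A : ℝ × ℝ → ℝ × ℝ} {v : ℝ × ℝ → ℂ} {χ : ℝ × ℝ → ℝ} {p q σ : ℝ}

/-- The factors depending on `χ` in the expansion of the energy density of `χ • v`. -/
def cutoffTerm (p q σ : ℝ) (χ : ℝ × ℝ → ℝ) : Fin 5 → ℝ × ℝ → ℝ :=
  ![fun y ↦ p * χ y ^ 2,
    fun y ↦ 2 * p * (χ y * fderiv ℝ χ y (1, 0)),
    fun y ↦ 2 * p * (χ y * fderiv ℝ χ y (0, 1)),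
    fun y ↦ p * (fderiv ℝ χ y (1, 0) ^ 2 + fderiv ℝ χ y (0, 1) ^ 2) - q * χ y ^ 2,
    fun y ↦ σ * χ y ^ 4]

/-- The factors depending on `v` in the expansion of the energy density of `χ • v`. -/
def stateTerm (A : ℝ × ℝ → ℝ × ℝ) (v : ℝ × ℝ → ℂ) : Fin 5 → ℝ × ℝ → ℝ :=
  ![magGradSq A v,
    fun x ↦ inner ℝ (v x) (magDeriv A v x (1, 0)),
    fun x ↦ inner ℝ (v x) (magDeriv A v x (0, 1)),
    fun x ↦ ‖v x‖ ^ 2,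
    fun x ↦ ‖v x‖ ^ 4]

lemma glDensity_translate_smul (hχ : ContDiff ℝ 1 χ) (hv : ContDiff ℝ 1 v) (a x : ℝ × ℝ) :
    glDensity p q σ A (fun y ↦ χ (y - a) • v y) x =
      ∑ i, cutoffTerm p q σ χ i (x - a) * stateTerm A v i x := by
  have hχa : ContDiff ℝ 1 fun y ↦ χ (y - a) := hχ.comp (contDiff_id.sub contDiff_const)
  rw [glDensity, magGradSq_smul (hχa.differentiable one_ne_zero x)
    (hv.differentiable one_ne_zero x), fderiv_comp_sub a, norm_smul, mul_pow, mul_pow,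
    norm_eq_abs, sq_abs, Even.pow_abs (by decide)]
  simp only [Fin.sum_univ_five, cutoffTerm, stateTerm, Matrix.cons_val]
  ring

lemma integrable_cutoffTerm (hχ : ContDiff ℝ 1 χ) (hc : HasCompactSupport χ) (i : Fin 5) :
    Integrable (cutoffTerm p q σ χ i) := by
  have := hχ.continuous
  have := continuous_fderiv_apply_const hχ (1, 0)
  have := continuous_fderiv_apply_const hχ (0, 1)
  have hcont : Continuous (cutoffTerm p q σ χ i) := by
    fin_cases i <;> simp only [cutoffTerm, Fin.reduceFinMk, Matrix.cons_val] <;> fun_prop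
  refine hcont.integrable_of_hasCompactSupport (HasCompactSupport.intro hc fun y hy ↦ ?_)
  have hy0 : χ y = 0 := image_eq_zero_of_notMem_tsupport hy
  have hy1 : fderiv ℝ χ y = 0 := by
    rw [(notMem_tsupport_iff_eventuallyEq.1 hy).fderiv_eq]
    exact fderiv_const_apply 0
  fin_cases i <;> simp [cutoffTerm, hy0, hy1]

lemma integrable_stateTerm (hA : Continuous A) (hv : ContDiff ℝ 1 v) (hc : HasCompactSupport v)
    (i : Fin 5) : Integrable (stateTerm A v i) := by
  have := hv.continuous
  have := continuous_magDeriv hA hv (1, 0)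
  have := continuous_magDeriv hA hv (0, 1)
  have := continuous_magGradSq hA hv
  have hcont : Continuous (stateTerm A v i) := by
    fin_cases i <;> simp only [stateTerm, Fin.reduceFinMk, Matrix.cons_val] <;> fun_prop
  refine hcont.integrable_of_hasCompactSupport (HasCompactSupport.intro hc fun y hy ↦ ?_)
  have hy0 : v y = 0 := image_eq_zero_of_notMem_tsupport hy
  fin_cases i <;> simp [stateTerm, hy0, magGradSq_eq_zero_of_notMem_tsupport hy]

lemma integral_glDensity_eq (hA : Continuous A) (hv : ContDiff ℝ 1 v) (hc : HasCompactSupport v) :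
    ∫ x, glDensity p q σ A v x = p * (∫ x, stateTerm A v 0 x) - q * (∫ x, stateTerm A v 3 x) +
      σ * ∫ x, stateTerm A v 4 x := by
  have hstate := integrable_stateTerm hA hv hc
  calc ∫ x, glDensity p q σ A v x
      = ∫ x, (p * stateTerm A v 0 x - q * stateTerm A v 3 x + σ * stateTerm A v 4 x) := rfl
    _ = (∫ x, (p * stateTerm A v 0 x - q * stateTerm A v 3 x)) + ∫ x, σ * stateTerm A v 4 x :=
      integral_add (((hstate 0).const_mul p).sub ((hstate 3).const_mul q)) ((hstate 4).const_mul σ)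
    _ = _ := by
      rw [integral_sub ((hstate 0).const_mul p) ((hstate 3).const_mul q)]
      simp only [integral_const_mul]

lemma integral_mul_fderiv_self (hχ : ContDiff ℝ 1 χ) (hc : HasCompactSupport χ) (e : ℝ × ℝ) :
    ∫ y, χ y * fderiv ℝ χ y e = 0 := by
  have parts := integral_mul_fderiv_eq_neg_of_hasCompactSupport (μ := volume) hχ hχ hc e
  simp only [mul_comm (fderiv ℝ χ _ _)] at parts
  linarith

lemma integrable_integral_glDensity_translate_smul (hA : Continuous A) (hχ : ContDiff ℝ 1 χ)
    (hχc : HasCompactSupport χ) (hv : ContDiff ℝ 1 v) (hvc : HasCompactSupport v) :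
    Integrable fun a ↦ ∫ x, glDensity p q σ A (fun y ↦ χ (y - a) • v y) x := by
  simp only [glDensity_translate_smul hχ hv]
  exact (integrable_finsetSum _ fun i _ ↦ integrable_comp_sub_mul
    (integrable_cutoffTerm hχ hχc i) (integrable_stateTerm hA hv hvc i)).integral_prod_left

-- The cross terms vanish because `∫ χ ∇χ = 0`: this is the IMS formula for a continuous partition.
theorem integral_integral_glDensity_translate_smul (hA : Continuous A) (hχ : ContDiff ℝ 1 χ)
    (hχc : HasCompactSupport χ) (hv : ContDiff ℝ 1 v) (hvc : HasCompactSupport v) :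
    ∫ a, ∫ x, glDensity p q σ A (fun y ↦ χ (y - a) • v y) x =
      ∫ x, glDensity (p * ∫ y, χ y ^ 2)
        (q * (∫ y, χ y ^ 2) - p * ∫ y, (fderiv ℝ χ y (1, 0) ^ 2 + fderiv ℝ χ y (0, 1) ^ 2))
        (σ * ∫ y, χ y ^ 4) A v x := by
  have hcutoff (p q σ : ℝ) := integrable_cutoffTerm (p := p) (q := q) (σ := σ) hχ hχc
  have hsq : Integrable fun y ↦ χ y ^ 2 := by simpa [cutoffTerm] using hcutoff 1 0 0 0
  have hgrad : Integrable fun y ↦ fderiv ℝ χ y (1, 0) ^ 2 + fderiv ℝ χ y (0, 1) ^ 2 := by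
    simpa [cutoffTerm] using hcutoff 1 0 0 3
  simp only [glDensity_translate_smul hχ hv]
  rw [integral_integral_sum_comp_sub_mul _ (fun i _ ↦ hcutoff p q σ i) fun i _ ↦
    integrable_stateTerm hA hv hvc i]
  simp only [Fin.sum_univ_five, cutoffTerm, Matrix.cons_val]
  rw [integral_glDensity_eq hA hv hvc, integral_sub (hgrad.const_mul p) (hsq.const_mul q)]
  simp only [integral_const_mul, integral_mul_fderiv_self hχ hχc]
  ring

lemma tsupport_translate_smul_subset {a : ℝ × ℝ} {r : ℝ} (hχ : tsupport χ ⊆ Metric.ball 0 r) :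
    tsupport (fun y ↦ χ (y - a) • v y) ⊆ Metric.ball a r := fun x hx ↦ by
  have hxa : x - a ∈ tsupport χ := tsupport_comp_subset_preimage χ
    (by fun_prop : Continuous fun y ↦ y - a) (tsupport_smul_subset_left _ v hx)
  simpa [dist_eq_norm] using hχ hxa

end Localization

section MeanEnergy

variable {g : ℝ → ℝ} {κ b b' x y T : ℝ}

/-- The Dirichlet energy per unit area of a square of area `n`, for the parameter `|b|`. The value
at `n = 0` is `0`, because `x / 0 = 0`. -/
def meanEnergy (n : ℕ) (b : ℝ) : ℝ := eD |b| (√n) / n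

lemma meanEnergy_nonpos (n : ℕ) (b : ℝ) : meanEnergy n b ≤ 0 :=
  div_nonpos_of_nonpos_of_nonneg (eD_nonpos (abs_nonneg b) _) n.cast_nonneg

lemma neg_half_le_meanEnergy (n : ℕ) (b : ℝ) : -(1 / 2) ≤ meanEnergy n b := by
  rcases n.eq_zero_or_pos with rfl | hn
  · simp [meanEnergy]
  · have hn' : (0 : ℝ) < n := by exact_mod_cast hn
    have := neg_sq_div_two_le_eD (abs_nonneg b) (√n)
    rw [sq_sqrt hn'.le] at this
    rw [meanEnergy, le_div_iff₀ hn']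
    linarith

lemma norm_meanEnergy_le (n : ℕ) (b : ℝ) : ‖meanEnergy n b‖ ≤ 1 / 2 :=
  abs_le.2 ⟨neg_half_le_meanEnergy n b, (meanEnergy_nonpos n b).trans (by norm_num)⟩

lemma meanEnergy_mono (n : ℕ) (hb : 0 ≤ b) (h : b ≤ b') : meanEnergy n b ≤ meanEnergy n b' :=
  div_le_div_of_nonneg_right
    (eD_mono (abs_nonneg b) (abs_le_abs_of_nonneg hb h) _) n.cast_nonneg

lemma measurable_meanEnergy (n : ℕ) : Measurable (meanEnergy n) := by
  have mono : Monotone fun b ↦ eD (max b 0) (√n) := fun b b' h ↦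
    eD_mono (le_max_right b 0) (max_le_max_right 0 h) _
  have eq_comp : (fun b ↦ eD |b| (√n)) = (fun b ↦ eD (max b 0) (√n)) ∘ fun b ↦ |b| := by
    ext b
    simp
  have meas : Measurable fun b ↦ eD |b| (√n) := eq_comp ▸ mono.measurable.comp measurable_norm
  exact meas.div_const (n : ℝ)

lemma IsLimitG.tendsto_meanEnergy (hg : IsLimitG g) (hb : 0 < b) :
    Tendsto (meanEnergy · b) atTop (𝓝 (g b)) := by
  have := (hg b hb).comp (tendsto_sqrt_atTop.comp tendsto_natCast_atTop_atTop)
  simpa only [Function.comp_def, sq_sqrt (Nat.cast_nonneg _), meanEnergy, abs_of_pos hb] using this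

lemma IsLimitG.nonpos (hg : IsLimitG g) (hb : 0 < b) : g b ≤ 0 :=
  le_of_tendsto (hg.tendsto_meanEnergy hb) (Eventually.of_forall fun n ↦ meanEnergy_nonpos n b)

lemma IsLimitG.intervalIntegrable (hg : IsLimitG g) (hx : 0 ≤ x) (hxy : x ≤ y) :
    IntervalIntegrable g volume x y := by
  rw [intervalIntegrable_iff_integrableOn_Ioc_of_le hxy]
  have lim : ∀ᵐ b ∂volume.restrict (Ioc x y), Tendsto (meanEnergy · b) atTop (𝓝 (g b)) :=
    (ae_restrict_iff' measurableSet_Ioc).2 <| Eventually.of_forall fun b hb ↦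
      hg.tendsto_meanEnergy (hx.trans_lt hb.1)
  refine Integrable.of_bound (aestronglyMeasurable_of_tendsto_ae atTop
    (fun n ↦ (measurable_meanEnergy n).aestronglyMeasurable) lim) (1 / 2) ?_
  filter_upwards [lim] with b hb
  exact le_of_tendsto hb.norm (Eventually.of_forall fun n ↦ norm_meanEnergy_le n b)

lemma IsLimitG.integral_antitone (hg : IsLimitG g) (hx : 0 ≤ x) (hxy : x ≤ y) :
    ∫ b in (0 : ℝ)..y, g b ≤ ∫ b in (0 : ℝ)..x, g b := by
  rw [← intervalIntegral.integral_add_adjacent_intervals (hg.intervalIntegrable le_rfl hx)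
    (hg.intervalIntegrable hx hxy), intervalIntegral.integral_of_le hxy]
  exact add_le_of_nonpos_right <| setIntegral_nonpos measurableSet_Ioc fun b hb ↦
    hg.nonpos (hx.trans_lt hb.1)

/-- The mean energy attached to height `c * b` in the strip: there a unit square carries, after
rescaling, the energy of a square of area `⌊c * b⌋₊ + i`, and `κ` is the loss of precision in the
parameter `b`. -/
def cellProfile (κ c : ℝ) (i : ℕ) (b : ℝ) : ℝ := meanEnergy (⌊c * b⌋₊ + i) (κ * b)

lemma cellProfile_nonpos (κ c : ℝ) (i : ℕ) (b : ℝ) : cellProfile κ c i b ≤ 0 :=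
  meanEnergy_nonpos _ _

lemma measurable_cellProfile (κ c : ℝ) (i : ℕ) : Measurable (cellProfile κ c i) := by
  have joint : Measurable fun p : ℕ × ℝ ↦ meanEnergy p.1 p.2 :=
    measurable_from_prod_countable_right measurable_meanEnergy
  have index : Measurable fun b : ℝ ↦ ⌊c * b⌋₊ + i :=
    (Nat.measurable_floor.comp (measurable_const_mul c)).add_const i
  have comp_eq : cellProfile κ c i = (fun p : ℕ × ℝ ↦ meanEnergy p.1 p.2) ∘
    fun b ↦ (⌊c * b⌋₊ + i, κ * b) := rfl
  rw [comp_eq]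
  exact joint.comp (index.prodMk (measurable_const_mul κ))

lemma integrableOn_cellProfile_comp {α : Type*} [MeasurableSpace α] {m : Measure α} {φ : α → ℝ}
    {s : Set α} (hφ : Measurable φ) (hs : m s ≠ ⊤) (κ c : ℝ) (i : ℕ) :
    IntegrableOn (fun x ↦ cellProfile κ c i (φ x)) s m :=
  Measure.integrableOn_of_bounded hs ((measurable_cellProfile κ c i).comp hφ).aestronglyMeasurable
    (Eventually.of_forall fun x ↦ norm_meanEnergy_le _ (κ * φ x))

lemma IsLimitG.tendsto_cellProfile (hg : IsLimitG g) (hκ : 0 < κ) (hb : 0 < b) (i : ℕ) :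
    Tendsto (fun c ↦ cellProfile κ c i b) atTop (𝓝 (g (κ * b))) :=
  (hg.tendsto_meanEnergy (mul_pos hκ hb)).comp <|
    tendsto_atTop_mono (fun _ ↦ Nat.le_add_right _ i)
      (tendsto_nat_floor_atTop.comp (tendsto_id.atTop_mul_const hb))

lemma IsLimitG.tendsto_integral_cellProfile (hg : IsLimitG g) (hκ : 0 < κ) (hT : 0 ≤ T) (i : ℕ) :
    Tendsto (fun c ↦ ∫ b in (0 : ℝ)..T, cellProfile κ c i b) atTop
      (𝓝 (κ⁻¹ * ∫ b in (0 : ℝ)..κ * T, g b)) := by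
  have rescale : ∫ b in (0 : ℝ)..T, g (κ * b) = κ⁻¹ * ∫ b in (0 : ℝ)..κ * T, g b := by
    simp [intervalIntegral.integral_comp_mul_left g hκ.ne']
  rw [← rescale]
  refine intervalIntegral.tendsto_integral_filter_of_dominated_convergence (fun _ ↦ 1 / 2)
    (Eventually.of_forall fun c ↦ (measurable_cellProfile κ c i).aestronglyMeasurable)
    (Eventually.of_forall fun c ↦ Eventually.of_forall fun b _ ↦ norm_meanEnergy_le _ (κ * b))
    (by simp) (Eventually.of_forall fun b hb ↦ ?_)
  rw [uIoc_of_le hT] at hb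
  exact hg.tendsto_cellProfile hκ hb.1 i

end MeanEnergy

section LocalEnergy

variable {lam μ ε r σ : ℝ} {a : ℝ × ℝ} {v : ℝ × ℝ → ℂ}

lemma exists_tsupport_subset_ball_of_abs_eq {x y z : ℝ} (hyz : |y| = |z|) (hv : ContDiff ℝ 1 v)
    (hvs : tsupport v ⊆ Metric.ball (x, y) r) :
    ∃ w : ℝ × ℝ → ℂ, ContDiff ℝ 1 w ∧ tsupport w ⊆ Metric.ball (x, z) r ∧
      ∀ p q σ, ∫ x, glDensity p q σ Avan w x = ∫ x, glDensity p q σ Avan v x := by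
  rcases abs_eq_abs.1 hyz with rfl | rfl
  · exact ⟨v, hv, hvs, fun _ _ _ ↦ rfl⟩
  · refine ⟨v ∘ reflectSnd, hv.comp reflectSnd.contDiff, fun x hx ↦ ?_,
      fun _ _ _ ↦ integral_glDensity_comp_reflectSnd v⟩
    rw [tsupport_comp_reflectSnd] at hx
    have := hvs hx
    rwa [Metric.mem_ball, Prod.dist_eq, reflectSnd_apply, dist_neg_neg] at this

lemma cellProfile_le_integral_glDensity (hlam : 0 < lam) (hε : 0 < ε)
    (hle : μ + 1 / ε ≤ (1 + ε) * lam) (hv : ContDiff ℝ 1 v)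
    (hvs : tsupport v ⊆ Metric.ball a (1 / 2)) :
    lam * (1 + ε) ^ 2 * cellProfile (1 / (1 + ε) ^ 2) lam 1 (|a.2| / lam) ≤
      ∫ x, glDensity 1 μ (lam / 2) Avan v x := by
  obtain ⟨w, hw, hws, hwv⟩ := exists_tsupport_subset_ball_of_abs_eq (abs_abs a.2).symm hv hvs
  set n := ⌊|a.2|⌋₊ + 1 with hn
  have hn0 : (0 : ℝ) < n := by positivity
  have lower : |a.2| ≤ n := by simpa [hn] using (Nat.lt_floor_add_one |a.2|).le
  have upper : (n : ℝ) ≤ |a.2| + 1 := by simpa [hn] using Nat.floor_le (abs_nonneg a.2)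
  have profile_le : cellProfile (1 / (1 + ε) ^ 2) lam 1 (|a.2| / lam) ≤
      eD (n / lam / (1 + ε) ^ 2) (√n) / n :=
    calc cellProfile (1 / (1 + ε) ^ 2) lam 1 (|a.2| / lam)
        = meanEnergy n (|a.2| / lam / (1 + ε) ^ 2) := by
          rw [cellProfile, mul_div_cancel₀ _ hlam.ne', one_div_mul_eq_div]
      _ ≤ meanEnergy n (n / lam / (1 + ε) ^ 2) := meanEnergy_mono n (by positivity) (by gcongr)
      _ = _ := by rw [meanEnergy, abs_of_pos (by positivity)]
  calc lam * (1 + ε) ^ 2 * cellProfile (1 / (1 + ε) ^ 2) lam 1 (|a.2| / lam)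
      ≤ lam * (1 + ε) ^ 2 * (eD (n / lam / (1 + ε) ^ 2) (√n) / n) := by gcongr
    _ ≤ ∫ x, glDensity 1 μ (lam / 2) Avan w x := eD_le_integral_glDensity hlam hε hle hn0
      (abs_le.2 ⟨by linarith, by linarith⟩) hw hws
    _ = _ := hwv 1 μ (lam / 2)

lemma integral_glDensity_nonneg_of_le_abs_snd (hσ : 0 ≤ σ) (ha : μ + r ≤ |a.2|)
    (hv : ContDiff ℝ 1 v) (hvs : tsupport v ⊆ Metric.ball a r) :
    0 ≤ ∫ x, glDensity 1 μ σ Avan v x := by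
  obtain ⟨w, hw, hws, hwv⟩ := exists_tsupport_subset_ball_of_abs_eq (abs_abs a.2).symm hv hvs
  rw [← hwv]
  have hwc := hasCompactSupport_of_tsupport_subset_ball hws
  have hgrad : Integrable (magGradSq Avan w) :=
    (continuous_magGradSq continuous_Avan hw).integrable_of_hasCompactSupport
      (hasCompactSupport_magGradSq hwc)
  have hfield : Integrable fun x : ℝ × ℝ ↦ x.2 * ‖w x‖ ^ 2 := by
    have := hw.continuous
    exact (by fun_prop : Continuous fun x : ℝ × ℝ ↦ x.2 * ‖w x‖ ^ 2).integrable_of_hasCompactSupport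
      (HasCompactSupport.intro hwc fun x hx ↦ by simp [image_eq_zero_of_notMem_tsupport hx])
  have pointwise (x : ℝ × ℝ) :
      magGradSq Avan w x - x.2 * ‖w x‖ ^ 2 ≤ glDensity 1 μ σ Avan w x := by
    have field_le : μ * ‖w x‖ ^ 2 ≤ x.2 * ‖w x‖ ^ 2 := by
      by_cases hx : x ∈ tsupport w
      · have hdist : dist x.2 |a.2| < r := (le_max_right _ _).trans_lt (hws hx)
        gcongr
        linarith [(abs_lt.1 hdist).1]
      · simp [image_eq_zero_of_notMem_tsupport hx]
    have : 0 ≤ σ * ‖w x‖ ^ 4 := by positivity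
    unfold glDensity
    linarith
  calc 0 ≤ (∫ x, magGradSq Avan w x) - ∫ x : ℝ × ℝ, x.2 * ‖w x‖ ^ 2 :=
      sub_nonneg.2 (integral_snd_mul_norm_sq_le hw hwc)
    _ = ∫ x, (magGradSq Avan w x - x.2 * ‖w x‖ ^ 2) := (integral_sub hgrad hfield).symm
    _ ≤ _ :=
      integral_mono (hgrad.sub hfield) (integrable_glDensity continuous_Avan hw hwc) pointwise

end LocalEnergy

section Cutoff

variable {p q σ : ℝ} {A : ℝ × ℝ → ℝ × ℝ} {v : ℝ × ℝ → ℂ}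

/-- The mass `∫ χ²` by which averaging over the translates of a cutoff `χ` multiplies energies. -/
def cutoffMass (χ : ℝ × ℝ → ℝ) : ℝ := ∫ y, χ y ^ 2

/-- The localization error of the cutoff `χ` in the IMS formula, per unit of mass. -/
def cutoffCost (χ : ℝ × ℝ → ℝ) : ℝ :=
  (∫ y, (fderiv ℝ χ y (1, 0) ^ 2 + fderiv ℝ χ y (0, 1) ^ 2)) / cutoffMass χ

lemma cutoffCost_nonneg (χ : ℝ × ℝ → ℝ) : 0 ≤ cutoffCost χ :=
  div_nonneg (integral_nonneg fun _ ↦ by positivity) (integral_nonneg fun _ ↦ sq_nonneg _)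

lemma integrable_bump_pow (χ : ContDiffBump (0 : ℝ × ℝ)) {k : ℕ} (hk : k ≠ 0) :
    Integrable fun y ↦ χ y ^ k :=
  (χ.continuous.pow k).integrable_of_hasCompactSupport
    (χ.hasCompactSupport.comp_left (g := fun t : ℝ ↦ t ^ k) (zero_pow hk))

lemma sq_le_cutoffMass (χ : ContDiffBump (0 : ℝ × ℝ)) : (2 * χ.rIn) ^ 2 ≤ cutoffMass χ := by
  have volume_ball : volume.real (Metric.closedBall (0 : ℝ × ℝ) χ.rIn) = (2 * χ.rIn) ^ 2 := by
    have prod_eq := closedBall_prod_same (0 : ℝ) (0 : ℝ) χ.rIn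
    rw [Prod.mk_zero_zero] at prod_eq
    rw [← prod_eq, Measure.volume_eq_prod, measureReal_prod_prod,
      Real.volume_real_closedBall χ.rIn_pos.le, sq]
  calc (2 * χ.rIn) ^ 2 = ∫ _ in Metric.closedBall (0 : ℝ × ℝ) χ.rIn, (1 : ℝ) := by
        rw [setIntegral_const, volume_ball, smul_eq_mul, mul_one]
    _ = ∫ y in Metric.closedBall (0 : ℝ × ℝ) χ.rIn, χ y ^ 2 :=
      setIntegral_congr_fun Metric.isClosed_closedBall.measurableSet fun _ hy ↦ by
        simp [χ.one_of_mem_closedBall hy]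
    _ ≤ cutoffMass χ := setIntegral_le_integral (integrable_bump_pow χ two_ne_zero)
      (Eventually.of_forall fun _ ↦ sq_nonneg _)

lemma cutoffMass_pos (χ : ContDiffBump (0 : ℝ × ℝ)) : 0 < cutoffMass χ :=
  (pow_pos (mul_pos two_pos χ.rIn_pos) 2).trans_le (sq_le_cutoffMass χ)

lemma integral_integral_glDensity_translate_smul_le (χ : ContDiffBump (0 : ℝ × ℝ)) (hσ : 0 ≤ σ)
    (hA : Continuous A) (hv : ContDiff ℝ 1 v) (hvc : HasCompactSupport v) :
    ∫ a, ∫ x, glDensity p (q + p * cutoffCost χ) σ A (fun y ↦ χ (y - a) • v y) x ≤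
      cutoffMass χ * ∫ x, glDensity p q σ A v x := by
  have quartic_le : ∫ y, χ y ^ 4 ≤ cutoffMass χ :=
    integral_mono (integrable_bump_pow χ four_ne_zero) (integrable_bump_pow χ two_ne_zero)
      fun _ ↦ pow_le_pow_of_le_one χ.nonneg χ.le_one (by norm_num)
  have cost_mul_mass : cutoffCost χ * cutoffMass χ =
      ∫ y, (fderiv ℝ χ y (1, 0) ^ 2 + fderiv ℝ χ y (0, 1) ^ 2) :=
    div_mul_cancel₀ _ (cutoffMass_pos χ).ne'
  rw [integral_integral_glDensity_translate_smul hA χ.contDiff χ.hasCompactSupport hv hvc,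
    ← cost_mul_mass, ← cutoffMass, ← integral_const_mul (cutoffMass χ)]
  refine integral_mono (integrable_glDensity hA hv hvc)
    ((integrable_glDensity hA hv hvc).const_mul _) fun x ↦ ?_
  have : σ * ‖v x‖ ^ 4 * ∫ y, χ y ^ 4 ≤ σ * ‖v x‖ ^ 4 * cutoffMass χ := by gcongr
  simp only [glDensity]
  linarith

end Cutoff

section AbsIntegral

lemma setIntegral_le_integral_of_nonneg_compl {α : Type*} [MeasurableSpace α] {μ : Measure α}
    {s : Set α} {f g : α → ℝ} (hs : MeasurableSet s) (hf : IntegrableOn f s μ)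
    (hg : Integrable g μ) (hle : ∀ x ∈ s, f x ≤ g x) (h0 : ∀ x ∉ s, 0 ≤ g x) :
    ∫ x in s, f x ∂μ ≤ ∫ x, g x ∂μ := by
  rw [← integral_indicator hs]
  refine integral_mono ((integrable_indicator_iff hs).2 hf) hg fun x ↦ ?_
  by_cases hx : x ∈ s
  · simpa [hx] using hle x hx
  · simpa [hx] using h0 x hx

lemma setIntegral_Ioo_comp_abs (f : ℝ → ℝ) {T : ℝ} (hT : 0 ≤ T) :
    ∫ s in Ioo (-T) T, f |s| = 2 * ∫ s in (0 : ℝ)..T, f s := by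
  have indicator_eq : (Ioo (-T) T).indicator (fun s ↦ f |s|) = fun s ↦ (Iio T).indicator f |s| := by
    ext s
    simp [indicator_apply, abs_lt]
  rw [← integral_indicator measurableSet_Ioo, indicator_eq, integral_comp_abs,
    setIntegral_indicator measurableSet_Iio, Ioi_inter_Iio, ← integral_Ioc_eq_integral_Ioo,
    ← intervalIntegral.integral_of_le hT]

lemma setIntegral_Ioo_prod_comp_abs_snd (f : ℝ → ℝ) {x y T : ℝ} (hxy : x ≤ y) (hT : 0 ≤ T) :
    ∫ z in Ioo x y ×ˢ Ioo (-T) T, f |z.2| = (y - x) * (2 * ∫ s in (0 : ℝ)..T, f s) := by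
  have := setIntegral_prod_mul (μ := volume) (ν := volume) (fun _ : ℝ ↦ (1 : ℝ)) (fun s ↦ f |s|)
    (Ioo x y) (Ioo (-T) T)
  simpa [setIntegral_Ioo_comp_abs f hT, Real.volume_real_Ioo_of_le hxy,
    ← Measure.volume_eq_prod] using this

end AbsIntegral

section StripLowerBound

variable {χ : ContDiffBump (0 : ℝ × ℝ)} {L lam ε R T : ℝ} {u v : ℝ × ℝ → ℂ} {E : ℝ → ℝ}

lemma isOpen_Strip (R : ℝ) : IsOpen (Strip R) := isOpen_Ioo.prod isOpen_univ

lemma translate_smul_eq_zero_of_tsupport_subset_Strip {a : ℝ × ℝ} {φ : ℝ × ℝ → ℝ} {r : ℝ}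
    (hφ : tsupport φ ⊆ Metric.ball 0 r) (hv : tsupport v ⊆ Strip R)
    (ha : a.1 ∉ Ioo (-(R / 2 + r)) (R / 2 + r)) : (fun y ↦ φ (y - a) • v y) = fun _ ↦ 0 := by
  ext x
  by_contra hx
  have hxa : |x.1 - a.1| < r := (le_max_left _ _).trans_lt
    (tsupport_translate_smul_subset hφ (subset_tsupport _ hx))
  have hvx : v x ≠ 0 := fun h ↦ hx (by simp [h])
  have hxR := hv (subset_tsupport v hvx)
  have := abs_lt.1 hxa
  exact ha ⟨by linarith [hxR.1.1], by linarith [hxR.1.2]⟩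

theorem integral_cellProfile_le_integral_glDensity (hχ : χ.rOut < 1 / 2) (hlam : 0 < lam)
    (hε : 0 < ε) (hle : lam + cutoffCost χ + 1 / ε ≤ (1 + ε) * lam)
    (hT : lam + cutoffCost χ + 1 / 2 ≤ lam * T) (hR : 0 ≤ R) (hv : ContDiff ℝ 1 v)
    (hvc : HasCompactSupport v) (hvs : tsupport v ⊆ Strip R) :
    (R + 1) * (2 * (lam ^ 2 * (1 + ε) ^ 2 *
      ∫ b in (0 : ℝ)..T, cellProfile (1 / (1 + ε) ^ 2) lam 1 b)) ≤
        cutoffMass χ * ∫ x, glDensity 1 lam (lam / 2) Avan v x := by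
  set f : ℝ → ℝ := fun s ↦ lam * (1 + ε) ^ 2 * cellProfile (1 / (1 + ε) ^ 2) lam 1 (s / lam)
  have hT0 : 0 < lam * T := by linarith [cutoffCost_nonneg χ]
  have hχs : tsupport χ ⊆ Metric.ball 0 (1 / 2) :=
    χ.tsupport_eq ▸ Metric.closedBall_subset_ball hχ
  have translate_contDiff (a : ℝ × ℝ) : ContDiff ℝ 1 fun y ↦ χ (y - a) • v y :=
    (χ.contDiff.comp (contDiff_id.sub contDiff_const)).smul hv
  have translate_tsupport (a : ℝ × ℝ) := tsupport_translate_smul_subset (a := a) (v := v) hχs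
  have f_integrable : IntegrableOn (fun a : ℝ × ℝ ↦ f |a.2|)
      (Ioo (-(R / 2 + 1 / 2)) (R / 2 + 1 / 2) ×ˢ Ioo (-(lam * T)) (lam * T)) :=
    (integrableOn_cellProfile_comp (measurable_norm.comp measurable_snd |>.div_const lam)
      (by simp [Measure.volume_eq_prod, ENNReal.mul_eq_top]) _ _ _).const_mul _
  calc _ = (R / 2 + 1 / 2 - -(R / 2 + 1 / 2)) * (2 * ∫ s in (0 : ℝ)..lam * T, f s) := by
        simp only [f]
        rw [intervalIntegral.integral_const_mul,
          intervalIntegral.integral_comp_div (cellProfile _ _ _) hlam.ne', zero_div,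
          mul_div_cancel_left₀ _ hlam.ne', smul_eq_mul]
        ring
    _ = ∫ a in Ioo (-(R / 2 + 1 / 2)) (R / 2 + 1 / 2) ×ˢ Ioo (-(lam * T)) (lam * T), f |a.2| :=
      (setIntegral_Ioo_prod_comp_abs_snd f (by linarith) hT0.le).symm
    _ ≤ ∫ a, ∫ x, glDensity 1 (lam + 1 * cutoffCost χ) (lam / 2) Avan
          (fun y ↦ χ (y - a) • v y) x := by
      refine setIntegral_le_integral_of_nonneg_compl (measurableSet_Ioo.prod measurableSet_Ioo)
        f_integrable (integrable_integral_glDensity_translate_smul continuous_Avan χ.contDiff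
          χ.hasCompactSupport hv hvc) (fun a _ ↦ ?_) fun a ha ↦ ?_
      · exact cellProfile_le_integral_glDensity hlam hε (by rwa [one_mul])
          (translate_contDiff a) (translate_tsupport a)
      · by_cases ha1 : a.1 ∈ Ioo (-(R / 2 + 1 / 2)) (R / 2 + 1 / 2)
        · have ha2 : lam * T ≤ |a.2| := not_lt.1 fun h ↦ ha ⟨ha1, abs_lt.1 h⟩
          exact integral_glDensity_nonneg_of_le_abs_snd (by positivity) (by linarith)
            (translate_contDiff a) (translate_tsupport a)
        · rw [translate_smul_eq_zero_of_tsupport_subset_Strip hχs hvs ha1]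
          simp
    _ ≤ _ := integral_integral_glDensity_translate_smul_le χ (by positivity) continuous_Avan hv hvc

lemma Estrip_eq_setIntegral_glDensity (L R : ℝ) (u : ℝ × ℝ → ℂ) :
    Estrip L R u =
      ∫ x in Strip R, glDensity 1 (L ^ (-(2 : ℝ) / 3)) (L ^ (-(2 : ℝ) / 3) / 2) Avan u x := by
  simp [Estrip, stripDensity, glDensity]

lemma memH1mag0_zero (R : ℝ) : MemH1mag0 R fun _ ↦ 0 :=
  ⟨contDiff_const, by simp, by simp [funext (magGradSq_zero Avan)], by simp, fun _ _ ↦ rfl⟩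

lemma nonempty_image_Estrip (L R : ℝ) : (Estrip L R '' {u | MemH1mag0 R u}).Nonempty :=
  ⟨_, _, memH1mag0_zero R, rfl⟩

theorem integral_cellProfile_le_Estrip (hχ : χ.rOut < 1 / 2) (hL : 0 < L)
    (hlam : lam = L ^ (-(2 : ℝ) / 3)) (hε : 0 < ε)
    (hle : lam + cutoffCost χ + 1 / ε ≤ (1 + ε) * lam)
    (hT : lam + cutoffCost χ + 1 / 2 ≤ lam * T) (hR : 0 ≤ R) (hu : MemH1mag0 R u) :
    (R + 1) * (2 * (lam ^ 2 * (1 + ε) ^ 2 *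
      ∫ b in (0 : ℝ)..T, cellProfile (1 / (1 + ε) ^ 2) lam 1 b)) / cutoffMass χ ≤
        Estrip L R u := by
  have hlam0 : 0 < lam := hlam ▸ rpow_pos_of_pos hL _
  obtain ⟨hu1, hu2, hgrad, hu4, hu0⟩ := hu
  refine le_of_forall_pos_le_add fun δ hδ ↦ ?_
  obtain ⟨v, hv, hvc, hvs, hvu⟩ := exists_hasCompactSupport_integral_glDensity_lt (q := lam)
    (σ := lam / 2) (isOpen_Strip R) continuous_Avan hu1 hu0 hu2 hu4 hgrad zero_le_one hδ
  rw [Estrip_eq_setIntegral_glDensity, ← hlam]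
  refine le_trans ?_ hvu.le
  rw [div_le_iff₀' (cutoffMass_pos χ)]
  exact integral_cellProfile_le_integral_glDensity hχ hlam0 hε hle hT hR hv hvc hvs

lemma bddBelow_image_Estrip (hL : 0 < L) (hR : 0 ≤ R) :
    BddBelow (Estrip L R '' {u | MemH1mag0 R u}) := by
  let χ : ContDiffBump (0 : ℝ × ℝ) := ⟨1 / 8, 1 / 4, by norm_num, by norm_num⟩
  have hlam : 0 < L ^ (-(2 : ℝ) / 3) := rpow_pos_of_pos hL _
  generalize hlam_eq : L ^ (-(2 : ℝ) / 3) = lam at hlam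
  obtain ⟨ε, hε, hle⟩ : ∃ ε > 0, cutoffCost χ + 1 / ε ≤ ε * lam := by
    have large := (tendsto_id.atTop_mul_const hlam).eventually_ge_atTop (cutoffCost χ + 1)
    obtain ⟨ε, hε1, hε⟩ := ((eventually_ge_atTop (1 : ℝ)).and large).exists
    have : 1 / ε ≤ 1 := (div_le_one₀ (by linarith)).2 hε1
    exact ⟨ε, by linarith, by simp only [id] at hε; linarith⟩
  refine ⟨_, forall_mem_image.2 fun u hu ↦ integral_cellProfile_le_Estrip (χ := χ)
    (T := (lam + cutoffCost χ + 1 / 2) / lam) (by norm_num [χ]) hL hlam_eq.symm hε (by linarith)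
    (mul_div_cancel₀ _ hlam.ne').ge hR hu⟩

theorem IsLimitE.integral_cellProfile_le (hE : IsLimitE E) (hχ : χ.rOut < 1 / 2) (hL : 0 < L)
    (hlam : lam = L ^ (-(2 : ℝ) / 3)) (hε : 0 < ε)
    (hle : lam + cutoffCost χ + 1 / ε ≤ (1 + ε) * lam)
    (hT : lam + cutoffCost χ + 1 / 2 ≤ lam * T) :
    2 * (lam ^ 2 * (1 + ε) ^ 2 *
      ∫ b in (0 : ℝ)..T, cellProfile (1 / (1 + ε) ^ 2) lam 1 b) / cutoffMass χ ≤ E L := by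
  set C := 2 * (lam ^ 2 * (1 + ε) ^ 2 *
    ∫ b in (0 : ℝ)..T, cellProfile (1 / (1 + ε) ^ 2) lam 1 b) / cutoffMass χ
  have lim : Tendsto (fun R : ℝ ↦ (1 + R⁻¹) * C) atTop (𝓝 ((1 + 0) * C)) :=
    (tendsto_const_nhds.add tendsto_inv_atTop_zero).mul_const C
  have C_le : (1 + 0) * C ≤ E L := by
    refine le_of_tendsto_of_tendsto lim (hE L hL) ?_
    filter_upwards [eventually_gt_atTop 0] with R hR
    have le_egs : (R + 1) * C ≤ egs L R := by
      refine le_csInf (nonempty_image_Estrip L R) (forall_mem_image.2 fun u hu ↦ ?_)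
      simpa only [C, mul_div_assoc] using
        integral_cellProfile_le_Estrip hχ hL hlam hε hle hT hR.le hu
    calc (1 + R⁻¹) * C = (R + 1) * C / R := by field_simp
      _ ≤ egs L R / R := by gcongr
  rwa [add_zero, one_mul] at C_le

end StripLowerBound

section Superposition

variable {ι : Type*} {p q σ R : ℝ} {A : ℝ × ℝ → ℝ × ℝ} {u v : ℝ × ℝ → ℂ}
  {f : ι → ℝ × ℝ → ℂ} {s : Finset ι}

lemma tsupport_finsetSum_subset (f : ι → ℝ × ℝ → ℂ) (s : Finset ι) :
    tsupport (∑ i ∈ s, f i) ⊆ ⋃ i ∈ s, tsupport (f i) := by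
  refine closure_minimal (fun x hx ↦ ?_)
    (s.finite_toSet.isClosed_biUnion fun i _ ↦ isClosed_tsupport _)
  rw [Function.mem_support, Finset.sum_apply] at hx
  obtain ⟨i, hi, hxi⟩ := Finset.exists_ne_zero_of_sum_ne_zero hx
  exact mem_biUnion hi (subset_tsupport _ hxi)

lemma glDensity_add_of_disjoint (h : Disjoint (tsupport u) (tsupport v)) (x : ℝ × ℝ) :
    glDensity p q σ A (u + v) x = glDensity p q σ A u x + glDensity p q σ A v x := by
  by_cases hx : x ∈ tsupport u
  · have hxv := disjoint_left.1 h hx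
    rw [glDensity_eq_zero_of_notMem_tsupport hxv, add_zero]
    refine glDensity_congr ?_
    filter_upwards [notMem_tsupport_iff_eventuallyEq.1 hxv] with y hy
    simp [hy]
  · rw [glDensity_eq_zero_of_notMem_tsupport hx, zero_add]
    refine glDensity_congr ?_
    filter_upwards [notMem_tsupport_iff_eventuallyEq.1 hx] with y hy
    simp [hy]

lemma glDensity_sum_of_pairwiseDisjoint
    (h : (s : Set ι).PairwiseDisjoint fun i ↦ tsupport (f i)) (x : ℝ × ℝ) :
    glDensity p q σ A (∑ i ∈ s, f i) x = ∑ i ∈ s, glDensity p q σ A (f i) x := by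
  classical
  induction s using Finset.induction_on with
  | empty => exact glDensity_zero ..
  | insert i s hi ih =>
    rw [Finset.coe_insert, pairwiseDisjoint_insert_of_notMem (by simpa using hi)] at h
    rw [Finset.sum_insert hi, Finset.sum_insert hi, glDensity_add_of_disjoint, ih h.1]
    exact (disjoint_iUnion₂_right.2 h.2).mono_right (tsupport_finsetSum_subset f s)

lemma memH1mag0_of_hasCompactSupport (hv : ContDiff ℝ 1 v) (hvc : HasCompactSupport v)
    (hvs : tsupport v ⊆ Strip R) : MemH1mag0 R v := by
  have integrable_norm_pow {k : ℕ} (hk : k ≠ 0) : Integrable fun x ↦ ‖v x‖ ^ k :=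
    (hv.continuous.norm.pow k).integrable_of_hasCompactSupport
      (hvc.comp_left (g := fun z : ℂ ↦ ‖z‖ ^ k) (by simp [hk]))
  refine ⟨hv, (integrable_norm_pow two_ne_zero).integrableOn,
    ((continuous_magGradSq continuous_Avan hv).integrable_of_hasCompactSupport
      (hasCompactSupport_magGradSq hvc)).integrableOn,
    (integrable_norm_pow four_ne_zero).integrableOn, fun x hx ↦ ?_⟩
  rw [(isOpen_Strip R).frontier_eq] at hx
  exact image_eq_zero_of_notMem_tsupport fun h ↦ hx.2 (hvs h)

end Superposition

section StripUpperBound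

variable {L lam ε δ : ℝ} {E : ℝ → ℝ}

lemma exists_integral_glDensity_le_meanEnergy (hlam : 0 < lam) (hε : 0 < ε) (hε1 : ε < 1)
    (hle : 1 + 1 / ε ≤ ε * lam) (hδ : 0 < δ) (x : ℝ) (k : ℤ) :
    ∃ v : ℝ × ℝ → ℂ, ContDiff ℝ 1 v ∧ tsupport v ⊆ Metric.ball (x, (k : ℝ)) (1 / 2) ∧
      ∫ x, glDensity 1 lam (lam / 2) Avan v x ≤
        lam * (1 - ε) ^ 2 * meanEnergy k.natAbs (k / lam * ((1 + ε) / (1 - ε))) + δ := by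
  rcases eq_or_ne k 0 with rfl | hk
  · refine ⟨0, contDiff_const, by simp, ?_⟩
    simpa [meanEnergy, Pi.zero_def] using hδ.le
  have natAbs_eq : (k.natAbs : ℝ) = |(k : ℝ)| := by simp [Nat.cast_natAbs]
  have hk0 : (0 : ℝ) < k.natAbs := by exact_mod_cast Int.natAbs_pos.2 hk
  obtain ⟨v, hv, hvs, hvle⟩ := exists_integral_glDensity_le_eD (t := k.natAbs)
    (a := (x, (k.natAbs : ℝ))) hlam hε hε1 hle hk0 (by simp) hδ
  obtain ⟨w, hw, hws, hwv⟩ := exists_tsupport_subset_ball_of_abs_eq (z := k)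
    (by rw [natAbs_eq, abs_abs]) hv hvs
  have abs_eq : |k / lam * ((1 + ε) / (1 - ε))| = k.natAbs / lam * ((1 + ε) / (1 - ε)) := by
    have : 0 < 1 - ε := by linarith
    rw [abs_mul, abs_div, abs_of_pos hlam, abs_of_pos (by positivity : 0 < (1 + ε) / (1 - ε)),
      natAbs_eq]
  exact ⟨w, hw, hws, by rwa [hwv, meanEnergy, abs_eq]⟩

/-- The centre of the unit cell in column `i.1` and at height `i.2`, where the `N` columns fill a
strip of width `N` centred at the origin. -/
def cellCenter (N : ℕ) (i : ℕ × ℤ) : ℝ × ℝ := (i.1 + 1 / 2 - N / 2, i.2)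

lemma one_le_dist_cellCenter (N : ℕ) {i j : ℕ × ℤ} (h : i ≠ j) :
    1 ≤ dist (cellCenter N i) (cellCenter N j) := by
  rw [Prod.dist_eq, le_max_iff]
  rcases not_and_or.1 (mt Prod.ext_iff.2 h) with h | h
  · left
    have dist_eq : dist (cellCenter N i).1 (cellCenter N j).1 = dist i.1 j.1 := by
      simp [cellCenter, Nat.dist_eq, Real.dist_eq]
    exact dist_eq ▸ Nat.pairwise_one_le_dist h
  · right
    exact (Int.pairwise_one_le_dist h).trans_eq (Int.dist_cast_real _ _).symm

lemma ball_cellCenter_subset_Strip {N : ℕ} {i : ℕ × ℤ} (hi : i.1 < N) :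
    Metric.ball (cellCenter N i) (1 / 2) ⊆ Strip N := by
  intro x hx
  have hx1 : |x.1 - (i.1 + 1 / 2 - N / 2)| < 1 / 2 := (le_max_left _ _).trans_lt hx
  have hiN : (i.1 : ℝ) + 1 ≤ N := by exact_mod_cast hi
  have hi0 : (0 : ℝ) ≤ i.1 := i.1.cast_nonneg
  rw [abs_lt] at hx1
  exact ⟨⟨by linarith, by linarith⟩, mem_univ _⟩

lemma egs_le_sum_integral_glDensity {N : ℕ} (hL : 0 < L) (hlam : lam = L ^ (-(2 : ℝ) / 3))
    {s : Finset (ℕ × ℤ)} (hs : ∀ i ∈ s, i.1 < N) {f : ℕ × ℤ → ℝ × ℝ → ℂ}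
    (hf : ∀ i, ContDiff ℝ 1 (f i))
    (hfs : ∀ i, tsupport (f i) ⊆ Metric.ball (cellCenter N i) (1 / 2)) :
    egs L N ≤ ∑ i ∈ s, ∫ x, glDensity 1 lam (lam / 2) Avan (f i) x := by
  have hfc (i) : HasCompactSupport (f i) := hasCompactSupport_of_tsupport_subset_ball (hfs i)
  have disjoint : (s : Set (ℕ × ℤ)).PairwiseDisjoint fun i ↦ tsupport (f i) := fun i _ j _ hij ↦
    (Metric.ball_disjoint_ball (by linarith [one_le_dist_cellCenter N hij])).mono (hfs i) (hfs j)
  have sum_contDiff : ContDiff ℝ 1 (∑ i ∈ s, f i) := by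
    simpa only [Finset.sum_fn] using ContDiff.sum fun i _ ↦ hf i
  have sum_compact : HasCompactSupport (∑ i ∈ s, f i) :=
    (s.finite_toSet.isCompact_biUnion fun i _ ↦ hfc i).of_isClosed_subset
      (isClosed_tsupport _) (tsupport_finsetSum_subset f s)
  have sum_strip : tsupport (∑ i ∈ s, f i) ⊆ Strip N := (tsupport_finsetSum_subset f s).trans <|
    iUnion₂_subset fun i hi ↦ (hfs i).trans (ball_cellCenter_subset_Strip (hs i hi))
  calc egs L N ≤ Estrip L N (∑ i ∈ s, f i) := csInf_le (bddBelow_image_Estrip hL N.cast_nonneg)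
        (mem_image_of_mem _ (memH1mag0_of_hasCompactSupport sum_contDiff sum_compact sum_strip))
    _ = ∫ x, ∑ i ∈ s, glDensity 1 lam (lam / 2) Avan (f i) x := by
        rw [Estrip_eq_setIntegral_glDensity, ← hlam,
          setIntegral_glDensity_of_tsupport_subset sum_strip]
        simp_rw [glDensity_sum_of_pairwiseDisjoint disjoint]
    _ = _ := integral_finsetSum s fun i _ ↦ integrable_glDensity continuous_Avan (hf i) (hfc i)

lemma egs_le_sum_meanEnergy (hL : 0 < L) (hlam : lam = L ^ (-(2 : ℝ) / 3)) (hε : 0 < ε)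
    (hε1 : ε < 1) (hle : 1 + 1 / ε ≤ ε * lam) (N M : ℕ) :
    egs L N ≤ N * ∑ k ∈ Finset.Icc (-M : ℤ) M,
      lam * (1 - ε) ^ 2 * meanEnergy k.natAbs (k / lam * ((1 + ε) / (1 - ε))) := by
  have hlam0 : 0 < lam := hlam ▸ rpow_pos_of_pos hL _
  set e : ℤ → ℝ := fun k ↦
    lam * (1 - ε) ^ 2 * meanEnergy k.natAbs (k / lam * ((1 + ε) / (1 - ε)))
  have egs_le {δ : ℝ} (hδ : 0 < δ) :
      egs L N ≤ N * ∑ k ∈ Finset.Icc (-M : ℤ) M, (e k + δ) := by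
    choose f hf hfs hfe using fun i : ℕ × ℤ ↦ exists_integral_glDensity_le_meanEnergy hlam0 hε hε1
      hle hδ (cellCenter N i).1 i.2
    calc egs L N ≤ ∑ i ∈ Finset.range N ×ˢ Finset.Icc (-M : ℤ) M,
          ∫ x, glDensity 1 lam (lam / 2) Avan (f i) x :=
        egs_le_sum_integral_glDensity hL hlam
          (fun i hi ↦ Finset.mem_range.1 (Finset.mem_product.1 hi).1) hf hfs
      _ ≤ ∑ i ∈ Finset.range N ×ˢ Finset.Icc (-M : ℤ) M, (e i.2 + δ) :=
        Finset.sum_le_sum fun i _ ↦ hfe i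
      _ = _ := by rw [Finset.sum_product]; simp
  have lim : Tendsto (fun δ ↦ N * ∑ k ∈ Finset.Icc (-M : ℤ) M, (e k + δ)) (𝓝[>] 0)
      (𝓝 (N * ∑ k ∈ Finset.Icc (-M : ℤ) M, (e k + 0))) :=
    (Continuous.tendsto (by fun_prop) 0).mono_left nhdsWithin_le_nhds
  simpa using ge_of_tendsto lim (eventually_mem_nhdsWithin.mono fun δ hδ ↦ egs_le hδ)

lemma sum_meanEnergy_le_integral_cellProfile {κ c : ℝ} (hκ : 0 ≤ κ) (hc : 0 < c) :
    ∑ k ∈ Finset.range (⌊c⌋₊ + 1), meanEnergy k (k / c * κ) ≤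
      c * ∫ b in (0 : ℝ)..1, cellProfile κ c 0 b := by
  set G : ℝ → ℝ := fun s ↦ cellProfile κ c 0 (s / c)
  have G_integrable (x y : ℝ) : IntervalIntegrable G volume x y :=
    ⟨integrableOn_cellProfile_comp (measurable_id.div_const c) (by simp) _ _ _,
      integrableOn_cellProfile_comp (measurable_id.div_const c) (by simp) _ _ _⟩
  have le_G {k : ℕ} {s : ℝ} (hs : s ∈ Ioo (k : ℝ) (k + 1 : ℕ)) :
      meanEnergy k (k / c * κ) ≤ G s := by
    have floor_eq : ⌊s⌋₊ = k := (Nat.floor_eq_iff (k.cast_nonneg.trans hs.1.le)).2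
      ⟨hs.1.le, by simpa using hs.2⟩
    simp only [G]
    rw [cellProfile, mul_div_cancel₀ _ hc.ne', floor_eq, add_zero, mul_comm κ]
    exact meanEnergy_mono k (by positivity) (by gcongr; exact hs.1.le)
  calc ∑ k ∈ Finset.range (⌊c⌋₊ + 1), meanEnergy k (k / c * κ)
      ≤ ∑ k ∈ Finset.range (⌊c⌋₊ + 1), ∫ s in (k : ℝ)..(k + 1 : ℕ), G s := by
        refine Finset.sum_le_sum fun k _ ↦ ?_
        simpa using intervalIntegral.integral_mono_on_of_le_Ioo (a := (k : ℝ)) (b := (k + 1 : ℕ))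
          (f := fun _ ↦ meanEnergy k (k / c * κ)) (by simp) (by simp) (G_integrable _ _)
          fun s hs ↦ le_G hs
    _ = ∫ s in (0 : ℝ)..(⌊c⌋₊ + 1 : ℕ), G s := by
        simpa using intervalIntegral.sum_integral_adjacent_intervals
          (n := ⌊c⌋₊ + 1) (a := fun k : ℕ ↦ (k : ℝ)) fun k _ ↦ G_integrable _ _
    _ ≤ ∫ s in (0 : ℝ)..c, G s := by
        have hcM : c ≤ (⌊c⌋₊ + 1 : ℕ) := by exact_mod_cast (Nat.lt_floor_add_one c).le
        rw [← intervalIntegral.integral_add_adjacent_intervals (G_integrable 0 c)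
          (G_integrable c _), intervalIntegral.integral_of_le hcM]
        exact add_le_of_nonpos_right <| setIntegral_nonpos measurableSet_Ioc fun s _ ↦
          cellProfile_nonpos _ _ _ _
    _ = c * ∫ b in (0 : ℝ)..1, cellProfile κ c 0 b := by
        rw [intervalIntegral.integral_comp_div (cellProfile κ c 0) hc.ne', zero_div,
          div_self hc.ne', smul_eq_mul]

theorem IsLimitE.le_integral_cellProfile (hE : IsLimitE E) (hL : 0 < L)
    (hlam : lam = L ^ (-(2 : ℝ) / 3)) (hε : 0 < ε) (hε1 : ε < 1) (hle : 1 + 1 / ε ≤ ε * lam) :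
    E L ≤ 2 * (lam ^ 2 * (1 - ε) ^ 2 *
      ∫ b in (0 : ℝ)..1, cellProfile ((1 + ε) / (1 - ε)) lam 0 b) := by
  have hlam0 : 0 < lam := hlam ▸ rpow_pos_of_pos hL _
  have : 0 < 1 - ε := by linarith
  set h : ℤ → ℝ := fun k ↦ meanEnergy k.natAbs (k / lam * ((1 + ε) / (1 - ε)))
  have h_even : h.Even := fun k ↦ by simp [h, meanEnergy, neg_div, abs_mul]
  have E_le : E L ≤ ∑ k ∈ Finset.Icc (-⌊lam⌋₊ : ℤ) ⌊lam⌋₊, lam * (1 - ε) ^ 2 * h k := by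
    refine le_of_tendsto ((hE L hL).comp tendsto_natCast_atTop_atTop) ?_
    filter_upwards [eventually_gt_atTop 0] with N hN
    exact (div_le_iff₀' (by exact_mod_cast hN)).2 (egs_le_sum_meanEnergy hL hlam hε hε1 hle N _)
  calc E L ≤ ∑ k ∈ Finset.Icc (-⌊lam⌋₊ : ℤ) ⌊lam⌋₊, lam * (1 - ε) ^ 2 * h k := E_le
    _ = lam * (1 - ε) ^ 2 * (2 * ∑ k ∈ Finset.range (⌊lam⌋₊ + 1),
          meanEnergy k (k / lam * ((1 + ε) / (1 - ε)))) := by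
        rw [← Finset.mul_sum, Finset.sum_Icc_of_even_eq_range h_even]
        simp [h, meanEnergy]
    _ ≤ lam * (1 - ε) ^ 2 * (2 * (lam *
          ∫ b in (0 : ℝ)..1, cellProfile ((1 + ε) / (1 - ε)) lam 0 b)) := by
        gcongr
        exact sum_meanEnergy_le_integral_cellProfile (by positivity) hlam0
    _ = _ := by ring

end StripUpperBound

section Asymptotics

variable {g E : ℝ → ℝ} {ε c : ℝ}

lemma tendsto_two_mul_mul_nhdsGT_zero {F : ℝ → ℝ} (hF : ContinuousAt F 0) (hF0 : F 0 = 1)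
    (I : ℝ) : Tendsto (fun ε ↦ 2 * (F ε * I)) (𝓝[>] 0) (𝓝 (2 * I)) := by
  simpa [hF0] using ((hF.tendsto.mul_const I).const_mul 2).mono_left nhdsWithin_le_nhds

lemma tendsto_rpow_neg_two_thirds_nhdsGT_zero :
    Tendsto (fun L : ℝ ↦ L ^ (-(2 : ℝ) / 3)) (𝓝[>] 0) atTop :=
  tendsto_rpow_neg_nhdsGT_zero (by norm_num)

lemma rpow_four_thirds_mul_sq {L : ℝ} (hL : 0 < L) :
    L ^ ((4 : ℝ) / 3) * (L ^ (-(2 : ℝ) / 3)) ^ 2 = 1 := by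
  rw [← rpow_natCast, ← rpow_mul hL.le, ← rpow_add hL]
  norm_num

lemma eventually_lt_rpow_mul_of_lt_div_cutoffMass (hg : IsLimitG g) (hE : IsLimitE E)
    {χ : ContDiffBump (0 : ℝ × ℝ)} (hχ : χ.rOut < 1 / 2) (hε : 0 < ε)
    (hc : c < 2 * ((1 + ε) ^ 4 * ∫ b in (0 : ℝ)..1, g b) / cutoffMass χ) :
    ∀ᶠ L in 𝓝[>] 0, c < L ^ ((4 : ℝ) / 3) * E L := by
  have hmass := cutoffMass_pos χ
  have lim := (((hg.tendsto_integral_cellProfile (κ := 1 / (1 + ε) ^ 2) (T := 1 + 2 * ε)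
    (by positivity) (by positivity) 1).const_mul ((1 + ε) ^ 2)).const_mul 2).div_const
      (cutoffMass χ) |>.comp tendsto_rpow_neg_two_thirds_nhdsGT_zero
  have lim_gt : c < 2 * ((1 + ε) ^ 2 * ((1 / (1 + ε) ^ 2)⁻¹ *
      ∫ b in (0 : ℝ)..1 / (1 + ε) ^ 2 * (1 + 2 * ε), g b)) / cutoffMass χ :=
    calc c < 2 * ((1 + ε) ^ 4 * ∫ b in (0 : ℝ)..1, g b) / cutoffMass χ := hc
      _ ≤ 2 * ((1 + ε) ^ 4 * ∫ b in (0 : ℝ)..1 / (1 + ε) ^ 2 * (1 + 2 * ε), g b) /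
            cutoffMass χ := by
        gcongr 2 * (_ * ?_) / _
        refine hg.integral_antitone (by positivity) ?_
        rw [one_div_mul_eq_div, div_le_one (by positivity)]
        nlinarith
      _ = _ := by field_simp
  filter_upwards [lim.eventually_const_lt lim_gt, self_mem_nhdsWithin,
    (tendsto_rpow_neg_two_thirds_nhdsGT_zero.const_mul_atTop hε).eventually_ge_atTop
      (cutoffCost χ + 1 / ε + 1 / 2)] with L hlt hL hlarge
  have hε' : 0 < 1 / ε := one_div_pos.2 hε
  have E_ge := hE.integral_cellProfile_le (χ := χ) (T := 1 + 2 * ε) (ε := ε)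
    hχ hL rfl hε (by linarith) (by linarith [cutoffCost_nonneg χ])
  calc c < 2 * ((1 + ε) ^ 2 * ∫ b in (0 : ℝ)..1 + 2 * ε,
        cellProfile (1 / (1 + ε) ^ 2) (L ^ (-(2 : ℝ) / 3)) 1 b) / cutoffMass χ := hlt
    _ = L ^ ((4 : ℝ) / 3) * (2 * ((L ^ (-(2 : ℝ) / 3)) ^ 2 * (1 + ε) ^ 2 *
          ∫ b in (0 : ℝ)..1 + 2 * ε,
            cellProfile (1 / (1 + ε) ^ 2) (L ^ (-(2 : ℝ) / 3)) 1 b) / cutoffMass χ) := by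
        linear_combination (-(2 * ((1 + ε) ^ 2 * ∫ b in (0 : ℝ)..1 + 2 * ε,
          cellProfile (1 / (1 + ε) ^ 2) (L ^ (-(2 : ℝ) / 3)) 1 b) / cutoffMass χ)) *
            rpow_four_thirds_mul_sq hL
    _ ≤ L ^ ((4 : ℝ) / 3) * E L := mul_le_mul_of_nonneg_left E_ge (rpow_nonneg (le_of_lt hL) _)

lemma eventually_lt_rpow_mul_of_lt (hg : IsLimitG g) (hE : IsLimitE E) (hε : 0 < ε) (hε1 : ε < 1)
    (hc : c < 2 * ((1 + ε) ^ 4 / (1 - ε) ^ 2 * ∫ b in (0 : ℝ)..1, g b)) :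
    ∀ᶠ L in 𝓝[>] 0, c < L ^ ((4 : ℝ) / 3) * E L := by
  let χ : ContDiffBump (0 : ℝ × ℝ) :=
    ⟨(1 - ε) / 2, 1 / 2 - ε / 4, by linarith, by linarith⟩
  have : 0 < 1 - ε := by linarith
  have le_mass : (1 - ε) ^ 2 ≤ cutoffMass χ := by
    simpa [χ, mul_div_cancel₀] using sq_le_cutoffMass χ
  have integral_nonpos : ∫ b in (0 : ℝ)..1, g b ≤ 0 := by
    simpa using hg.integral_antitone le_rfl zero_le_one
  refine eventually_lt_rpow_mul_of_lt_div_cutoffMass hg hE (χ := χ)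
    (by simp only [χ]; linarith) hε (hc.trans_le ?_)
  calc 2 * ((1 + ε) ^ 4 / (1 - ε) ^ 2 * ∫ b in (0 : ℝ)..1, g b)
      ≤ 2 * ((1 + ε) ^ 4 / cutoffMass χ * ∫ b in (0 : ℝ)..1, g b) := by
        refine mul_le_mul_of_nonneg_left (mul_le_mul_of_nonpos_right ?_ integral_nonpos) two_pos.le
        gcongr
    _ = _ := by ring

lemma eventually_rpow_mul_lt_of_lt (hg : IsLimitG g) (hE : IsLimitE E) (hε : 0 < ε) (hε1 : ε < 1)
    (hc : 2 * ((1 - ε) ^ 3 / (1 + ε) * ∫ b in (0 : ℝ)..1, g b) < c) :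
    ∀ᶠ L in 𝓝[>] 0, L ^ ((4 : ℝ) / 3) * E L < c := by
  have h1ε : 0 < 1 - ε := by linarith
  have lim := ((hg.tendsto_integral_cellProfile (κ := (1 + ε) / (1 - ε)) (by positivity)
    zero_le_one 0).const_mul ((1 - ε) ^ 2)).const_mul 2 |>.comp
      tendsto_rpow_neg_two_thirds_nhdsGT_zero
  have lim_lt : 2 * ((1 - ε) ^ 2 * (((1 + ε) / (1 - ε))⁻¹ *
      ∫ b in (0 : ℝ)..(1 + ε) / (1 - ε) * 1, g b)) < c :=
    calc _ = 2 * ((1 - ε) ^ 3 / (1 + ε) * ∫ b in (0 : ℝ)..(1 + ε) / (1 - ε), g b) := by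
          rw [mul_one]; field_simp
      _ ≤ 2 * ((1 - ε) ^ 3 / (1 + ε) * ∫ b in (0 : ℝ)..1, g b) := by
          gcongr 2 * (_ * ?_)
          exact hg.integral_antitone zero_le_one ((one_le_div h1ε).2 (by linarith))
      _ < c := hc
  filter_upwards [lim.eventually_lt_const lim_lt, self_mem_nhdsWithin,
    (tendsto_rpow_neg_two_thirds_nhdsGT_zero.const_mul_atTop hε).eventually_ge_atTop
      (1 + 1 / ε)] with L hlt hL hlarge
  calc L ^ ((4 : ℝ) / 3) * E L
      ≤ L ^ ((4 : ℝ) / 3) * (2 * ((L ^ (-(2 : ℝ) / 3)) ^ 2 * (1 - ε) ^ 2 *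
          ∫ b in (0 : ℝ)..1, cellProfile ((1 + ε) / (1 - ε)) (L ^ (-(2 : ℝ) / 3)) 0 b)) :=
        mul_le_mul_of_nonneg_left (hE.le_integral_cellProfile hL rfl hε hε1 hlarge)
          (rpow_nonneg (le_of_lt hL) _)
    _ = 2 * ((1 - ε) ^ 2 *
          ∫ b in (0 : ℝ)..1, cellProfile ((1 + ε) / (1 - ε)) (L ^ (-(2 : ℝ) / 3)) 0 b) := by
        linear_combination (2 * ((1 - ε) ^ 2 *
          ∫ b in (0 : ℝ)..1, cellProfile ((1 + ε) / (1 - ε)) (L ^ (-(2 : ℝ) / 3)) 0 b)) *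
            rpow_four_thirds_mul_sq hL
    _ < c := hlt

end Asymptotics

/-- `L^{4/3} E(L) → 2∫₀¹ g(b) db` as `L → 0⁺`. -/
theorem E_asymptotics (g E : ℝ → ℝ) (hg : IsLimitG g) (hE : IsLimitE E) :
    Tendsto (fun L => L ^ ((4:ℝ)/3) * E L) (nhdsWithin 0 (Ioi 0))
      (nhds (2 * ∫ b in (0:ℝ)..1, g b)) := by
  have small : ∀ᶠ ε : ℝ in 𝓝[>] 0, ε ∈ Ioo 0 1 := Ioo_mem_nhdsGT one_pos
  refine tendsto_order.2 ⟨fun c hc ↦ ?_, fun c hc ↦ ?_⟩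
  · have lower : ContinuousAt (fun ε : ℝ ↦ (1 + ε) ^ 4 / (1 - ε) ^ 2) 0 :=
      ContinuousAt.div (by fun_prop) (by fun_prop) (by norm_num)
    obtain ⟨ε, hcε, hε, hε1⟩ := (((tendsto_two_mul_mul_nhdsGT_zero lower (by norm_num)
      _).eventually_const_lt hc).and small).exists
    exact eventually_lt_rpow_mul_of_lt hg hE hε hε1 hcε
  · have upper : ContinuousAt (fun ε : ℝ ↦ (1 - ε) ^ 3 / (1 + ε)) 0 :=
      ContinuousAt.div (by fun_prop) (by fun_prop) (by norm_num)
    obtain ⟨ε, hcε, hε, hε1⟩ := (((tendsto_two_mul_mul_nhdsGT_zero upper (by norm_num)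
      _).eventually_lt_const hc).and small).exists
    exact eventually_rpow_mul_lt_of_lt hg hE hε hε1 hcε

end
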